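/- arXiv:2312.09155 — 4 statements merged into one kernel-verified Lean document; each statement's English description precedes it below -/
import Mathlib

section
/- Let g ∈ SL_n(ℝ) be lower-triangular unipotent (g_{ii} = 1 for all i, and g_{ij} = 0 for i < j). Suppose v ∈ ⋀^k ℤ^n is a primitive integral vector such that ρ_k(g)·v lies in the line ℝ·(e_1∧e_2∧⋯∧e_k). Then v is a pure tensor: there exist f_1, …, f_k ∈ ℤ^n with v = f_1∧f_2∧⋯∧f_k. -/
noncomputable section

/-- The index type for the basis `{e_{i₁} ∧ ⋯ ∧ e_{i_k} : i₁ < ⋯ < i_k}` of `⋀^k ℝ^n`: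
`k`-element subsets of `Fin n`. -/
abbrev WedgeIdx (n k : ℕ) := {s : Finset (Fin n) // s.card = k}

/-- The increasing enumeration of a `k`-element subset of `Fin n`. -/
def subsetEmb {n k : ℕ} (I : WedgeIdx n k) : Fin k → Fin n :=
  fun a => ((I.1.orderIsoOfFin I.2) a : Fin n)

/-- The matrix of the `k`-th exterior power `ρ_k(g)` of `g` in the wedge basis of `⋀^k ℝ^n`
(the `k`-th compound matrix, whose `(I, J)` entry is the `k × k` minor of `g` with rows `I`
and columns `J`): it is the unique matrix with
`ρ_k(g)(v₁ ∧ ⋯ ∧ v_k) = g v₁ ∧ ⋯ ∧ g v_k`. -/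
def compound (n k : ℕ) (g : Matrix (Fin n) (Fin n) ℝ) :
    Matrix (WedgeIdx n k) (WedgeIdx n k) ℝ :=
  fun I J => (Matrix.of fun a b : Fin k => g (subsetEmb I a) (subsetEmb J b)).det

/-- The coordinates, in the wedge basis of `⋀^k ℤ^n`, of the pure tensor
`f 0 ∧ f 1 ∧ ⋯ ∧ f (k-1)` of integer vectors. -/
def wedgeCoordsZ {n k : ℕ} (f : Fin k → Fin n → ℤ) : WedgeIdx n k → ℤ :=
  fun I => (Matrix.of fun a b : Fin k => f b (subsetEmb I a)).det

/-- The subset `{0, 1, …, k-1}` of `Fin n`, indexing the basis vector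
`e₁ ∧ e₂ ∧ ⋯ ∧ e_k` of `⋀^k ℝ^n`. -/
def idxLow (n k : ℕ) (hkn : k ≤ n) : WedgeIdx n k :=
  ⟨(Finset.range k).attachFin
      (fun m hm => lt_of_lt_of_le (Finset.mem_range.mp hm) hkn),
    by rw [Finset.card_attachFin, Finset.card_range]⟩

open Matrix

lemma subsetEmb_injective {n k : ℕ} (I : WedgeIdx n k) : Function.Injective (subsetEmb I) :=
  Subtype.val_injective.comp (I.1.orderIsoOfFin I.2).injective

lemma subsetEmb_mem {n k : ℕ} (I : WedgeIdx n k) (a : Fin k) : subsetEmb I a ∈ I.1 :=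
  ((I.1.orderIsoOfFin I.2) a).2

lemma exists_subsetEmb_eq {n k : ℕ} (I : WedgeIdx n k) {x : Fin n} (hx : x ∈ I.1) :
    ∃ a, subsetEmb I a = x :=
  ⟨(I.1.orderIsoOfFin I.2).symm ⟨x, hx⟩, by simp [subsetEmb]⟩

lemma exists_eq_subsetEmb_comp_perm {n k : ℕ} {φ : Fin k → Fin n} (hφ : Function.Injective φ) :
    ∃ (J : WedgeIdx n k) (σ : Equiv.Perm (Fin k)), φ = subsetEmb J ∘ σ := by
  let J : WedgeIdx n k := ⟨Finset.univ.image φ, by simp [Finset.card_image_of_injective _ hφ]⟩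
  choose s hs using fun a => exists_subsetEmb_eq J (x := φ a)
    (Finset.mem_image_of_mem φ (Finset.mem_univ a))
  have hinj : Function.Injective s := fun a b h => hφ (by rw [← hs a, ← hs b, h])
  exact ⟨J, Equiv.ofBijective s hinj.bijective_of_finite, funext fun a => (hs a).symm⟩

lemma det_one_submatrix_subsetEmb_of_ne {R : Type*} [CommRing R] {n k : ℕ} {I J : WedgeIdx n k}
    (h : I ≠ J) :
    ((1 : Matrix (Fin n) (Fin n) R).submatrix (subsetEmb I) (subsetEmb J)).det = 0 := by
  obtain ⟨x, hxI, hxJ⟩ : ∃ x ∈ I.1, x ∉ J.1 := by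
    by_contra! hsub
    exact h (Subtype.ext (Finset.eq_of_subset_of_card_le hsub (by rw [I.2, J.2])))
  obtain ⟨a, rfl⟩ := exists_subsetEmb_eq I hxI
  refine det_eq_zero_of_row_eq_zero a fun b => ?_
  rw [submatrix_apply, one_apply_ne]
  exact fun hab => hxJ (hab ▸ subsetEmb_mem J b)

/-- The Cauchy–Binet formula. -/
lemma det_mul_eq_sum_subsetEmb {R : Type*} [CommRing R] {n k : ℕ}
    (A : Matrix (Fin k) (Fin n) R) (B : Matrix (Fin n) (Fin k) R) :
    (A * B).det = ∑ I : WedgeIdx n k,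
      (A.submatrix id (subsetEmb I)).det * (B.submatrix (subsetEmb I) id).det := by
  let F : (Fin n → R) [⋀^Fin k]→ₗ[R] R := detRowAlternating.compLinearMap B.vecMulLinear
  let G : (Fin n → R) [⋀^Fin k]→ₗ[R] R := ∑ I : WedgeIdx n k,
    (B.submatrix (subsetEmb I) id).det •
      detRowAlternating.compLinearMap (LinearMap.funLeft R R (subsetEmb I))
  have hF (M : Matrix (Fin k) (Fin n) R) : F M = (M * B).det := rfl
  have hG (M : Matrix (Fin k) (Fin n) R) : G M = ∑ I : WedgeIdx n k,
      (M.submatrix id (subsetEmb I)).det * (B.submatrix (subsetEmb I) id).det := by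
    let ev : ((Fin n → R) [⋀^Fin k]→ₗ[R] R) →+ R :=
      { toFun := fun f => f M, map_zero' := rfl, map_add' := fun _ _ => rfl }
    refine (map_sum ev _ _).trans (Finset.sum_congr rfl fun I _ => ?_)
    exact mul_comm (B.submatrix (subsetEmb I) id).det (M.submatrix id (subsetEmb I)).det
  rw [← hF, ← hG]
  suffices h : F = G by rw [h]
  refine (Pi.basisFun R (Fin n)).ext_alternating fun φ hφ => ?_
  obtain ⟨J, σ, rfl⟩ := exists_eq_subsetEmb_comp_perm hφ
  have hM : (fun i => Pi.basisFun R (Fin n) ((subsetEmb J ∘ σ) i)) =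
      (1 : Matrix (Fin n) (Fin n) R).submatrix (subsetEmb J ∘ σ) id := by
    ext i j
    simp [Pi.single_apply, one_apply, eq_comm]
  rw [hM, hF, hG, Finset.sum_eq_single J]
  · have h₁ : (1 : Matrix (Fin n) (Fin n) R).submatrix (subsetEmb J ∘ σ) id * B =
        (B.submatrix (subsetEmb J) id).submatrix σ id := by
      ext i j
      simp [mul_apply, one_apply]
    have h₂ : ((1 : Matrix (Fin n) (Fin n) R).submatrix (subsetEmb J ∘ σ) id).submatrix id
        (subsetEmb J) = (1 : Matrix (Fin k) (Fin k) R).submatrix σ id := by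
      rw [← submatrix_one _ (subsetEmb_injective J)]
      rfl
    rw [h₁, h₂, det_permute, det_permute, det_one, mul_one]
  · intro I _ hI
    have h₂ : ((1 : Matrix (Fin n) (Fin n) R).submatrix (subsetEmb J ∘ σ) id).submatrix id
        (subsetEmb I) = ((1 : Matrix (Fin n) (Fin n) R).submatrix (subsetEmb J)
        (subsetEmb I)).submatrix σ id := rfl
    rw [h₂, det_permute, det_one_submatrix_subsetEmb_of_ne hI.symm, mul_zero, zero_mul]
  · simp

lemma compound_mul (n k : ℕ) (g h : Matrix (Fin n) (Fin n) ℝ) :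
    compound n k (g * h) = compound n k g * compound n k h := by
  ext I J
  exact det_mul_eq_sum_subsetEmb (g.submatrix (subsetEmb I) id) (h.submatrix id (subsetEmb J))

lemma compound_one (n k : ℕ) : compound n k 1 = 1 := by
  ext I J
  change ((1 : Matrix (Fin n) (Fin n) ℝ).submatrix (subsetEmb I) (subsetEmb J)).det = _
  rcases eq_or_ne I J with rfl | h
  · rw [submatrix_one _ (subsetEmb_injective I), det_one, one_apply_eq]
  · rw [det_one_submatrix_subsetEmb_of_ne h, one_apply_ne h]

lemma subsetEmb_idxLow {n k : ℕ} (hkn : k ≤ n) : subsetEmb (idxLow n k hkn) = Fin.castLE hkn := by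
  refine (Finset.orderEmbOfFin_unique (idxLow n k hkn).2 (fun x => ?_)
    (Fin.strictMono_castLE hkn)).symm
  simp [idxLow]

/-- An integer matrix with independent columns factors through a split injection of the same
size. -/
lemma exists_eq_mul_of_linearIndependent_col {n k : ℕ} {A : Matrix (Fin n) (Fin k) ℤ}
    (hA : LinearIndependent ℤ A.col) :
    ∃ (C : Matrix (Fin n) (Fin k) ℤ) (D : Matrix (Fin k) (Fin n) ℤ) (P : Matrix (Fin k) (Fin k) ℤ),
      D * C = 1 ∧ A = C * P := by
  obtain ⟨r, bM, bN, f, a, hsnf⟩ :=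
    (Submodule.span ℤ (Set.range A.col)).smithNormalForm (Pi.basisFun ℤ (Fin n))
  obtain rfl : r = k := by
    simpa using (Module.finrank_eq_card_basis bN).symm.trans
      (Module.finrank_eq_card_basis (Module.Basis.span hA))
  refine ⟨of fun l i => bM (f i) l, of fun i l => bM.repr (Pi.single l 1) (f i),
    of fun i j => bN.repr ⟨A.col j, Submodule.subset_span ⟨j, rfl⟩⟩ i * a i, ?_, ?_⟩
  · ext i j
    have h : bM.repr (bM (f j)) (f i) = ∑ l, bM (f j) l * bM.repr (Pi.single l 1) (f i) := by
      conv_lhs => rw [← (Pi.basisFun ℤ (Fin n)).sum_repr (bM (f j))]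
      simp only [map_sum, map_smul, Finsupp.finsetSum_apply, Finsupp.smul_apply, smul_eq_mul,
        Pi.basisFun_repr, Pi.basisFun_apply]
    simp only [mul_apply, of_apply, mul_comm (bM.repr _ _)]
    rw [← h, bM.repr_self, Finsupp.single_apply, one_apply]
    simp [f.injective.eq_iff, eq_comm]
  · ext l j
    have h := congrArg (fun x : Submodule.span ℤ (Set.range A.col) => (x : Fin n → ℤ) l)
      (bN.sum_repr ⟨A.col j, Submodule.subset_span ⟨j, rfl⟩⟩)
    simp only [Submodule.coe_sum, Submodule.coe_smul, hsnf, Finset.sum_apply, Pi.smul_apply,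
      smul_eq_mul] at h
    rw [mul_apply]
    refine h.symm.trans (Finset.sum_congr rfl fun i _ => ?_)
    simp only [of_apply]
    ring

/-- A primitive integral vector proportional to a nonzero pure tensor is a pure tensor. -/
lemma exists_eq_wedgeCoordsZ_of_smul_eq {n k : ℕ} (hk : 1 ≤ k) {m : WedgeIdx n k → ℤ}
    (hm0 : m ≠ 0)
    (hprim : ¬ ∃ a : ℤ, 2 ≤ a ∧ ∃ w : WedgeIdx n k → ℤ, m = fun I => a * w I)
    {A : Matrix (Fin n) (Fin k) ℤ} (hA : LinearIndependent ℤ A.col) {α β : ℤ} (hα : α ≠ 0)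
    (h : ∀ I, α * m I = β * (A.submatrix (subsetEmb I) id).det) :
    ∃ f : Fin k → Fin n → ℤ, m = wedgeCoordsZ f := by
  obtain ⟨C, D, P, hDC, rfl⟩ := exists_eq_mul_of_linearIndependent_col hA
  have hw : ∀ I, α * m I = β * P.det * (C.submatrix (subsetEmb I) id).det := fun I => by
    rw [h, show (C * P).submatrix (subsetEmb I) id = C.submatrix (subsetEmb I) id * P from rfl,
      det_mul]
    ring
  have hone := det_mul_eq_sum_subsetEmb D C
  rw [hDC, det_one] at hone
  obtain ⟨q, hq⟩ : α ∣ β * P.det := by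
    refine ⟨∑ I : WedgeIdx n k, (D.submatrix id (subsetEmb I)).det * m I, ?_⟩
    rw [← mul_one (β * P.det), hone, Finset.mul_sum, Finset.mul_sum]
    refine Finset.sum_congr rfl fun I _ => ?_
    linear_combination -(D.submatrix id (subsetEmb I)).det * hw I
  have hmq : ∀ I, m I = q * (C.submatrix (subsetEmb I) id).det := fun I =>
    mul_left_cancel₀ hα (by rw [hw, hq, mul_assoc])
  have hq0 : q ≠ 0 := fun h0 => hm0 (funext fun I => by simp [hmq, h0])
  have hq1 : ¬ 2 ≤ q := fun h2 => hprim ⟨q, h2, _, funext hmq⟩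
  have hq2 : ¬ 2 ≤ -q := fun h2 =>
    hprim ⟨-q, h2, fun I => -(C.submatrix (subsetEmb I) id).det, funext fun I => by
      rw [hmq, neg_mul_neg]⟩
  let j₀ : Fin k := ⟨0, hk⟩
  refine ⟨fun j i => (C.updateCol j₀ (q • C.col j₀)) i j, funext fun I => ?_⟩
  have hupd : (of fun a b : Fin k => (C.updateCol j₀ (q • C.col j₀)) (subsetEmb I a) b) =
      (C.submatrix (subsetEmb I) id).updateCol j₀
        (q • (C.submatrix (subsetEmb I) id).col j₀) := by
    ext a b
    simp [updateCol_apply]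
  rw [hmq, wedgeCoordsZ, hupd, det_updateCol_smul]
  congr 2
  ext a b
  simp +contextual [updateCol_apply]

/-- If `m` is `c` times the vector of maximal minors of `H`, the number `c` times any (possibly
unordered or degenerate) maximal minor of `H` is an integer. -/
lemma exists_intCast_eq_mul_det_submatrix {n k : ℕ} {m : WedgeIdx n k → ℤ}
    {H : Matrix (Fin n) (Fin k) ℝ} {c : ℝ}
    (h : ∀ I, (m I : ℝ) = c * (H.submatrix (subsetEmb I) id).det) (φ : Fin k → Fin n) :
    ∃ z : ℤ, (z : ℝ) = c * (H.submatrix φ id).det := by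
  by_cases hφ : Function.Injective φ
  · obtain ⟨J, σ, rfl⟩ := exists_eq_subsetEmb_comp_perm hφ
    refine ⟨Equiv.Perm.sign σ * m J, ?_⟩
    rw [show H.submatrix (subsetEmb J ∘ σ) id = (H.submatrix (subsetEmb J) id).submatrix σ id
      from rfl, det_permute]
    push_cast
    rw [h]
    ring
  · obtain ⟨a, b, hab, hne⟩ := Function.not_injective_iff.mp hφ
    refine ⟨0, ?_⟩
    rw [det_zero_of_row_eq hne (by ext j; simp [hab]), mul_zero, Int.cast_zero]

/-- If the top square block of `H` is the identity and `c` times every maximal minor of `H` is an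
integer, then `c • H` is an integer matrix. -/
lemma exists_int_matrix_eq_smul {n k : ℕ} (hkn : k ≤ n) {m : WedgeIdx n k → ℤ}
    {H : Matrix (Fin n) (Fin k) ℝ} (hH : H.submatrix (Fin.castLE hkn) id = 1) {c : ℝ}
    (h : ∀ I, (m I : ℝ) = c * (H.submatrix (subsetEmb I) id).det) :
    ∃ A : Matrix (Fin n) (Fin k) ℤ, A.map (Int.cast : ℤ → ℝ) = c • H := by
  choose A hA using fun i j =>
    exists_intCast_eq_mul_det_submatrix h (Function.update (Fin.castLE hkn) j i)
  refine ⟨of A, ?_⟩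
  ext i j
  have hupd : H.submatrix (Function.update (Fin.castLE hkn) j i) id =
      (1 : Matrix (Fin k) (Fin k) ℝ).updateRow j (H i) := by
    rw [← hH]
    ext a b
    by_cases hab : a = j <;> simp [updateRow_apply, hab]
  simp only [map_apply, of_apply, hA, hupd, Matrix.smul_apply, smul_eq_mul]
  rw [← cramer_transpose_apply, transpose_one, cramer_one, Module.End.one_apply]

lemma isUnit_det_inv_submatrix_castLE {n k : ℕ} (hkn : k ≤ n) {g : Matrix (Fin n) (Fin n) ℝ}
    (hgdet : g.det = 1) (hgupper : ∀ i j : Fin n, i < j → g i j = 0) :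
    IsUnit (g⁻¹.submatrix (Fin.castLE hkn) (Fin.castLE hkn)).det := by
  refine isUnit_det_of_left_inverse (B := g.submatrix (Fin.castLE hkn) (Fin.castLE hkn)) ?_
  ext i j
  have hinv := congrFun₂ (mul_nonsing_inv g (by simp [hgdet])) (Fin.castLE hkn i)
    (Fin.castLE hkn j)
  rw [mul_apply] at hinv
  rw [mul_apply, ← submatrix_one _ (Fin.castLE_injective hkn), submatrix_apply, ← hinv]
  refine Fintype.sum_of_injective _ (Fin.castLE_injective hkn) _ _ (fun l hl => ?_) fun _ => rfl
  rw [hgupper, zero_mul]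
  by_contra hlt
  exact hl ⟨⟨l, by have := i.2; simp [Fin.lt_def] at hlt; omega⟩, rfl⟩

theorem pure_tensor_of_compound_mulVec_mem_line
    (n k : ℕ) (hn : 2 ≤ n) (hk : 1 ≤ k) (hkn : k ≤ n - 1)
    (g : Matrix (Fin n) (Fin n) ℝ) (hgdet : g.det = 1)
    (hgdiag : ∀ i, g i i = 1) (hgupper : ∀ i j : Fin n, i < j → g i j = 0)
    (m : WedgeIdx n k → ℤ)
    (hm0 : m ≠ 0)
    (hprim : ¬ ∃ a : ℤ, 2 ≤ a ∧ ∃ w : WedgeIdx n k → ℤ, m = fun I => a * w I)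
    (hline : ∃ c : ℝ, (compound n k g).mulVec (fun I => (m I : ℝ)) =
      fun I => if I = idxLow n k (by omega) then c else 0) :
    ∃ f : Fin k → Fin n → ℤ, m = wedgeCoordsZ f := by
  obtain ⟨c, hc⟩ := hline
  have hkn' : k ≤ n := by omega
  let T := g⁻¹.submatrix (Fin.castLE hkn') (Fin.castLE hkn')
  have hT : IsUnit T.det := isUnit_det_inv_submatrix_castLE hkn' hgdet hgupper
  let H : Matrix (Fin n) (Fin k) ℝ := g⁻¹.submatrix id (Fin.castLE hkn') * T⁻¹
  have hH : H.submatrix (Fin.castLE hkn') id = 1 := mul_nonsing_inv T hT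
  have hm : ∀ I, (m I : ℝ) = c * T.det * (H.submatrix (subsetEmb I) id).det := fun I => by
    have hmul := congrFun (congrArg ((compound n k g⁻¹).mulVec) hc) I
    rw [mulVec_mulVec, ← compound_mul, nonsing_inv_mul g (by simp [hgdet]), compound_one,
      one_mulVec] at hmul
    replace hmul : (m I : ℝ) = ∑ J, compound n k g⁻¹ I J *
        (if J = idxLow n k hkn' then c else 0) := hmul
    rw [Finset.sum_eq_single_of_mem (idxLow n k hkn') (Finset.mem_univ _)
      fun J _ hJ => by rw [if_neg hJ, mul_zero], if_pos rfl] at hmul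
    have hfac : compound n k g⁻¹ I (idxLow n k hkn') =
        (H.submatrix (subsetEmb I) id * T).det := by
      rw [show H.submatrix (subsetEmb I) id * T = (H * T).submatrix (subsetEmb I) id from rfl,
        nonsing_inv_mul_cancel_right _ _ hT, compound, subsetEmb_idxLow]
      rfl
    rw [hmul, hfac, det_mul]
    ring
  have hlow := hm (idxLow n k hkn')
  rw [subsetEmb_idxLow, hH, det_one, mul_one] at hlow
  set c' : ℤ := m (idxLow n k hkn')
  rw [← hlow] at hm
  have hc' : c' ≠ 0 := fun h0 => hm0 (funext fun I => by
    have := hm I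
    rw [h0, Int.cast_zero, zero_mul] at this
    exact_mod_cast this)
  obtain ⟨A, hA⟩ := exists_int_matrix_eq_smul hkn' hH hm
  have hAind : LinearIndependent ℤ A.col := by
    refine Fintype.linearIndependent_iff.mpr fun x hx j => ?_
    have hrow : ∀ l, A (Fin.castLE hkn' j) l = if j = l then c' else 0 := fun l => by
      have h₁ := congrFun₂ hA (Fin.castLE hkn' j) l
      have h₂ := congrFun₂ hH j l
      simp only [submatrix_apply, id_eq, one_apply] at h₂
      rw [map_apply, Matrix.smul_apply, h₂] at h₁
      rw [← Int.cast_inj (α := ℝ), h₁]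
      split_ifs <;> simp
    have := congrFun hx (Fin.castLE hkn' j)
    simpa [hrow, hc'] using this
  refine exists_eq_wedgeCoordsZ_of_smul_eq hk hm0 hprim hAind (pow_ne_zero k hc') (β := c')
    fun I => ?_
  have hdet : ((A.submatrix (subsetEmb I) id).det : ℝ) =
      (c' : ℝ) ^ k * (H.submatrix (subsetEmb I) id).det := by
    rw [Int.cast_det, ← submatrix_map, hA,
      show ((c' : ℝ) • H).submatrix (subsetEmb I) id = (c' : ℝ) • H.submatrix (subsetEmb I) id
        from rfl, det_smul, Fintype.card_fin]
  rw [← Int.cast_inj (α := ℝ), Int.cast_mul, Int.cast_mul, Int.cast_pow, hdet, hm I]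
  ring

end
end

section
/- Let N ⊂ SL_n(ℝ) be the group of upper-triangular unipotent matrices, with Haar measure μ_N given by pushing forward Lebesgue measure on ℝ^{n(n−1)/2} under the coordinate parametrization u ↦ (u_{ij})_{i<j}. Let X := SL_n(ℝ)/SL_n(ℤ) and let μ be an SL_n(ℝ)-invariant Borel probability measure on X. Then for every point x ∈ X, every bounded open subset U ⊆ N with μ_N(U) > 0, and every bounded open subset W ⊆ X whose topological boundary satisfies μ(∂W) = 0, one has lim_{t→∞} (1/μ_N(U)) ∫_U 1_W(a_t u x) dμ_N(u) = μ(W), where 1_W denotes the characteristic function of W. -/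
open MeasureTheory Filter Topology

noncomputable section

/-- `SL_n(ℝ)`. -/
abbrev SL (n : ℕ) := Matrix.SpecialLinearGroup (Fin n) ℝ

/-- The subspace topology on `SL_n(ℝ)`, induced from the (entrywise) topology on the space of
`n × n` real matrices. -/
instance (n : ℕ) : TopologicalSpace (SL n) :=
  TopologicalSpace.induced (fun g => (g : Matrix (Fin n) (Fin n) ℝ)) inferInstance

/-- `SL_n(ℤ)`, viewed as a subgroup of `SL_n(ℝ)`. -/
def intSL (n : ℕ) : Subgroup (SL n) :=
  (Matrix.SpecialLinearGroup.map (n := Fin n) (Int.castRingHom ℝ)).range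

/-- The element `a_t = diag(e^{b₁ t}, …, e^{bₙ t})` of `SL_n(ℝ)` (using `∑ bᵢ = 0`). -/
def aSL {n : ℕ} (b : Fin n → ℝ) (hsum : ∑ i, b i = 0) (t : ℝ) : SL n :=
  ⟨Matrix.diagonal fun i => Real.exp (b i * t), by
    simp only [Matrix.det_diagonal]
    rw [← Real.exp_sum, ← Finset.sum_mul, hsum, zero_mul, Real.exp_zero]⟩

/-- Index type of the strictly-upper-triangular coordinates: pairs `(i, j)` with `i < j`.
There are `n(n-1)/2` of them. -/
abbrev TriIdx (n : ℕ) := {p : Fin n × Fin n // p.1 < p.2}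

/-- The upper-triangular unipotent matrix with strictly-upper entries given by `c`. -/
def uMat {n : ℕ} (c : TriIdx n → ℝ) : Matrix (Fin n) (Fin n) ℝ :=
  Matrix.of fun i j => if i = j then 1 else if h : i < j then c ⟨(i, j), h⟩ else 0

lemma uMat_det {n : ℕ} (c : TriIdx n → ℝ) : (uMat c).det = 1 := by
  have h : (uMat c).BlockTriangular id := by
    intro i j hij
    have h1 : ¬ i = j := fun h => absurd hij (by simp [h])
    have h2 : ¬ i < j := fun h => absurd (lt_trans h hij) (lt_irrefl _)
    simp [uMat, h1, h2]
  rw [Matrix.det_of_upperTriangular h]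
  simp [uMat]

/-- The upper-triangular unipotent matrix with strictly-upper entries `c`, as an element of
`SL_n(ℝ)`. The map `c ↦ uSL c` is the coordinate parametrization of the group `N` of
upper-triangular unipotent matrices, and the Haar measure `μ_N` is the pushforward of the
Lebesgue measure (`volume`) under it. -/
def uSL {n : ℕ} (c : TriIdx n → ℝ) : SL n := ⟨uMat c, uMat_det c⟩

instance (n : ℕ) : IsTopologicalGroup (SL n) :=
  Matrix.SpecialLinearGroup.topologicalGroup (n := Fin n) (R := ℝ)

instance (n : ℕ) : SecondCountableTopology (SL n) :=
  haveI : SecondCountableTopology (Matrix (Fin n) (Fin n) ℝ) :=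
    inferInstanceAs (SecondCountableTopology (Fin n → Fin n → ℝ))
  TopologicalSpace.secondCountableTopology_induced _ _ _

lemma isClosedEmbedding_coe_SL (n : ℕ) :
    IsClosedEmbedding (fun g : SL n => (g : Matrix (Fin n) (Fin n) ℝ)) :=
  (isClosed_eq (continuous_id.matrix_det) continuous_const).isClosedEmbedding_subtypeVal

instance (n : ℕ) : LocallyCompactSpace (SL n) :=
  haveI : LocallyCompactSpace (Matrix (Fin n) (Fin n) ℝ) :=
    inferInstanceAs (LocallyCompactSpace (Fin n → Fin n → ℝ))
  (isClosedEmbedding_coe_SL n).locallyCompactSpace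

instance (n : ℕ) : MeasurableSpace (SL n) := borel _

instance (n : ℕ) : BorelSpace (SL n) := ⟨rfl⟩

lemma isClosed_intSL (n : ℕ) : IsClosed (intSL n : Set (SL n)) := by
  have h : (intSL n : Set (SL n)) =
      ⋂ i, ⋂ j, (fun g : SL n => (g : Matrix (Fin n) (Fin n) ℝ) i j) ⁻¹'
        Set.range ((↑) : ℤ → ℝ) := by
    ext g
    simp only [Set.mem_iInter, Set.mem_preimage, Set.mem_range, SetLike.mem_coe]
    constructor
    · rintro ⟨A, rfl⟩ i j
      exact ⟨A i j, rfl⟩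
    · intro hg
      choose A hA using hg
      have hmap : (Int.castRingHom ℝ).mapMatrix (Matrix.of A) = (g : Matrix _ _ ℝ) := by
        ext i j
        exact hA i j
      have hdet : (Matrix.of A).det = 1 := by
        have := (Int.castRingHom ℝ).map_det (Matrix.of A)
        rw [hmap, g.2, eq_intCast] at this
        exact_mod_cast this
      exact ⟨⟨Matrix.of A, hdet⟩, Subtype.ext hmap⟩
  rw [h]
  refine isClosed_iInter fun i => isClosed_iInter fun j => ?_
  refine Int.isClosedEmbedding_coe_real.isClosed_range.preimage ?_
  exact (continuous_apply_apply i j).comp (isClosedEmbedding_coe_SL n).continuous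

instance (n : ℕ) : T2Space (SL n ⧸ intSL n) := by
  rw [t2Space_iff_of_isOpenQuotientMap QuotientGroup.isOpenQuotientMap_mk]
  have h : {q : SL n × SL n | (q.1 : SL n ⧸ intSL n) = q.2} =
      (fun q : SL n × SL n => q.1⁻¹ * q.2) ⁻¹' (intSL n : Set (SL n)) := by
    ext q
    simp [QuotientGroup.eq]
  rw [h]
  exact (isClosed_intSL n).preimage (by fun_prop)

section UnitaryRep

variable {H : Type*} [NormedAddCommGroup H] [InnerProductSpace ℝ H]

lemma LinearIsometryEquiv.apply_eq_self_of_inner_eq (T : H ≃ₗᵢ[ℝ] H) {w : H}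
    (h : inner ℝ (T w) w = inner ℝ w w) : T w = w := by
  have h2 : ‖T w - w‖ ^ 2 = 0 := by
    rw [norm_sub_sq_real, T.norm_map, h, real_inner_self_eq_norm_sq]
    ring
  exact sub_eq_zero.mp (norm_eq_zero.mp (pow_eq_zero_iff two_ne_zero |>.mp h2))

/-- The upper unipotent one-parameter subgroup of `SL₂(ℝ)`. -/
def upperSL2 (s : ℝ) : SL 2 := ⟨!![1, s; 0, 1], by simp [Matrix.det_fin_two]⟩

/-- The lower unipotent one-parameter subgroup of `SL₂(ℝ)`. -/
def lowerSL2 (s : ℝ) : SL 2 := ⟨!![1, 0; s, 1], by simp [Matrix.det_fin_two]⟩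

/-- The diagonal matrix `diag(l, l⁻¹)` of `SL₂(ℝ)`. -/
def diagSL2 (l : ℝ) (hl : l ≠ 0) : SL 2 := ⟨!![l, 0; 0, l⁻¹], by simp [Matrix.det_fin_two, hl]⟩

lemma upper_mul_lower_mul_upper {l r : ℝ} (hl : l ≠ 0) (hr : r ≠ 0) :
    upperSL2 ((l - 1) / r) * lowerSL2 r * upperSL2 ((l⁻¹ - 1) / r) =
      diagSL2 l hl * lowerSL2 (l * r) := by
  apply Subtype.ext
  change !![1, (l - 1) / r; 0, 1] * !![1, 0; r, 1] * !![1, (l⁻¹ - 1) / r; 0, 1] =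
    !![l, 0; 0, l⁻¹] * !![1, 0; l * r, 1]
  simp only [Matrix.mul_fin_two]
  ext i j
  fin_cases i <;> fin_cases j <;> simp <;> field_simp <;> ring

lemma diag_mul_lower {l : ℝ} (hl : l ≠ 0) (r : ℝ) :
    diagSL2 l hl * lowerSL2 r = lowerSL2 (l⁻¹ ^ 2 * r) * diagSL2 l hl := by
  apply Subtype.ext
  change !![l, 0; 0, l⁻¹] * !![1, 0; r, 1] = !![1, 0; l⁻¹ ^ 2 * r, 1] * !![l, 0; 0, l⁻¹]
  simp only [Matrix.mul_fin_two]
  ext i j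
  fin_cases i <;> fin_cases j <;> simp <;> field_simp

lemma rep_mul_apply {G : Type*} [Group G] (ρ : G →* (H ≃ₗᵢ[ℝ] H)) (g h : G) (v : H) :
    ρ (g * h) v = ρ g (ρ h v) := by
  rw [map_mul]
  rfl

lemma inner_rep_inv {G : Type*} [Group G] (ρ : G →* (H ≃ₗᵢ[ℝ] H)) (g : G) (v w : H) :
    inner ℝ v (ρ g⁻¹ w) = inner ℝ (ρ g v) w := by
  rw [← (ρ g).inner_map_map, ← rep_mul_apply, mul_inv_cancel, map_one]
  rfl

/-- Mautner phenomenon for `SL₂(ℝ)`, diagonal part. -/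
lemma diag_fixed_of_upper_fixed (ρ : SL 2 →* (H ≃ₗᵢ[ℝ] H))
    (hcont : ∀ v, Tendsto (fun r => ρ (lowerSL2 r) v) (𝓝 0) (𝓝 v))
    {w : H} (hw : ∀ s, ρ (upperSL2 s) w = w) (l : ℝ) (hl : l ≠ 0) :
    ρ (diagSL2 l hl) w = w := by
  apply LinearIsometryEquiv.apply_eq_self_of_inner_eq
  have h1 : Tendsto (fun r => inner ℝ (ρ (diagSL2 l hl * lowerSL2 (l * r)) w) w) (𝓝[≠] 0)
      (𝓝 (inner ℝ (ρ (diagSL2 l hl) w) w)) := by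
    have h0 : Tendsto (fun r : ℝ => l * r) (𝓝[≠] 0) (𝓝 0) := by
      have : Tendsto (fun r : ℝ => l * r) (𝓝 0) (𝓝 (l * 0)) :=
        (continuous_const_mul l).tendsto 0
      rw [mul_zero] at this
      exact this.mono_left nhdsWithin_le_nhds
    have h2 := ((ρ (diagSL2 l hl)).continuous.tendsto w).comp ((hcont w).comp h0)
    simpa [rep_mul_apply] using h2.inner (tendsto_const_nhds (x := w))
  have h3 : Tendsto (fun r => inner ℝ (ρ (lowerSL2 r) w) w) (𝓝[≠] 0) (𝓝 (inner ℝ w w)) :=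
    ((hcont w).mono_left nhdsWithin_le_nhds).inner tendsto_const_nhds
  refine tendsto_nhds_unique h1 (h3.congr' ?_)
  filter_upwards [self_mem_nhdsWithin] with r hr
  rw [← upper_mul_lower_mul_upper hl hr, rep_mul_apply, rep_mul_apply, hw]
  nth_rewrite 4 [← hw ((l - 1) / r)]
  rw [LinearIsometryEquiv.inner_map_map]

/-- Mautner phenomenon for `SL₂(ℝ)`: vectors fixed by the upper unipotents are fixed by the
lower unipotents. -/
lemma lower_fixed_of_upper_fixed (ρ : SL 2 →* (H ≃ₗᵢ[ℝ] H))
    (hcont : ∀ v, Tendsto (fun r => ρ (lowerSL2 r) v) (𝓝 0) (𝓝 v))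
    {w : H} (hw : ∀ s, ρ (upperSL2 s) w = w) (r : ℝ) :
    ρ (lowerSL2 r) w = w := by
  apply LinearIsometryEquiv.apply_eq_self_of_inner_eq
  have hd := diag_fixed_of_upper_fixed ρ hcont hw
  have h0 : Tendsto (fun l : ℝ => l⁻¹ ^ 2 * r) atTop (𝓝 0) := by
    have := ((tendsto_inv_atTop_zero (𝕜 := ℝ)).pow 2).mul_const r
    simpa using this
  have h1 : Tendsto (fun l : ℝ => inner ℝ (ρ (lowerSL2 (l⁻¹ ^ 2 * r)) w) w) atTop
      (𝓝 (inner ℝ w w)) := ((hcont w).comp h0).inner tendsto_const_nhds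
  refine tendsto_nhds_unique (tendsto_const_nhds.congr' ?_) h1
  filter_upwards [eventually_gt_atTop 0] with l hl
  have h2 : ρ (lowerSL2 (l⁻¹ ^ 2 * r)) w = ρ (diagSL2 l hl.ne') (ρ (lowerSL2 r) w) := by
    rw [← rep_mul_apply, diag_mul_lower, rep_mul_apply, hd]
  rw [h2]
  nth_rewrite 4 [← hd l hl.ne']
  rw [LinearIsometryEquiv.inner_map_map]

/-- Every ultrafilter limit, in the weak topology, of a translated vector `ρ (a t) v` is fixed by
the elements contracted by conjugation with `(a t)⁻¹`. -/
lemma exists_weak_limit [CompleteSpace H] {G : Type*} [Group G] [TopologicalSpace G]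
    (ρ : G →* (H ≃ₗᵢ[ℝ] H)) (hcont : ∀ v, Tendsto (fun g => ρ g v) (𝓝 1) (𝓝 v))
    {ι : Type*} (a : ι → G) (F : Ultrafilter ι) (v : H) :
    ∃ w : H, (∀ h, Tendsto (fun t => inner ℝ (ρ (a t) v) h) F (𝓝 (inner ℝ w h))) ∧
      ∀ u, Tendsto (fun t => (a t)⁻¹ * u * a t) F (𝓝 1) → ρ u w = w := by
  obtain ⟨w, hw⟩ : ∃ w : H,
      ∀ h, Tendsto (fun t => inner ℝ (ρ (a t) v) h) F (𝓝 (inner ℝ w h)) := by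
    let q : ι → WeakDual ℝ H := fun t =>
      StrongDual.toWeakDual (InnerProductSpace.toDual ℝ H (ρ (a t) v))
    have hK := WeakDual.isCompact_closedBall (𝕜 := ℝ) (0 : StrongDual ℝ H) ‖v‖
    have hq : ∀ t, q t ∈ WeakDual.toStrongDual ⁻¹' Metric.closedBall (0 : StrongDual ℝ H) ‖v‖ := by
      intro t
      simp [q]
    obtain ⟨φ, -, hφ⟩ := hK.ultrafilter_le_nhds (F.map q)
      (by
        rw [le_principal_iff]
        exact Filter.mem_map.mpr (Filter.univ_mem' hq))
    refine ⟨(InnerProductSpace.toDual ℝ H).symm (WeakDual.toStrongDual φ), fun h => ?_⟩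
    rw [InnerProductSpace.toDual_symm_apply]
    have := ((WeakDual.eval_continuous (𝕜 := ℝ) (E := H) h).tendsto φ).comp
      (show Tendsto q F (𝓝 φ) from hφ)
    refine this.congr fun t => ?_
    simp [q]
  refine ⟨w, hw, fun u hu => ?_⟩
  refine ext_inner_right ℝ fun h => ?_
  have h1 : Tendsto (fun t => inner ℝ (ρ (a t) v) (ρ u⁻¹ h)) F (𝓝 (inner ℝ (ρ u w) h)) := by
    rw [← inner_rep_inv]
    exact hw _
  refine tendsto_nhds_unique h1 ?_
  have h2 : Tendsto (fun t => inner ℝ (ρ (a t) (ρ ((a t)⁻¹ * u * a t) v - v)) h) F (𝓝 0) := by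
    have h3 : Tendsto (fun t => ‖ρ ((a t)⁻¹ * u * a t) v - v‖ * ‖h‖) F (𝓝 0) := by
      have := ((((hcont v).comp hu).sub_const v).norm).mul_const ‖h‖
      simpa using this
    refine squeeze_zero_norm (fun t => ?_) h3
    refine (norm_inner_le_norm _ _).trans ?_
    rw [LinearIsometryEquiv.norm_map]
  have h4 := h2.add (hw h)
  rw [zero_add] at h4
  refine h4.congr fun t => ?_
  rw [← inner_add_left, ← map_add, sub_add_cancel, inner_rep_inv, ← rep_mul_apply,
    ← rep_mul_apply, mul_assoc, mul_inv_cancel_left]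

end UnitaryRep

section Embedding

variable {n : ℕ}

/-- The `n × 2` matrix whose columns are the `i`-th and `j`-th standard basis vectors. -/
def basisCols (i j : Fin n) : Matrix (Fin n) (Fin 2) ℝ :=
  Matrix.of fun a k => if a = ![i, j] k then 1 else 0

lemma basisCols_zero (i j a : Fin n) : basisCols i j a 0 = if a = i then 1 else 0 := rfl

lemma basisCols_one (i j a : Fin n) : basisCols i j a 1 = if a = j then 1 else 0 := rfl

lemma basisCols_transpose_mul {i j : Fin n} (hij : i ≠ j) :
    (basisCols i j).transpose * basisCols i j = 1 := by
  rw [← Matrix.ext_iff, Fin.forall_fin_two, Fin.forall_fin_two, Fin.forall_fin_two]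
  simp [Matrix.mul_apply, basisCols_zero, basisCols_one, hij, hij.symm]

/-- The embedding of `SL₂(ℝ)` in `SL_n(ℝ)` acting on the coordinates `i` and `j`. -/
def embSL2 {i j : Fin n} (hij : i ≠ j) : SL 2 →* SL n where
  toFun x := ⟨1 + basisCols i j * ((x : Matrix (Fin 2) (Fin 2) ℝ) - 1) *
      (basisCols i j).transpose, by
    rw [Matrix.mul_assoc, Matrix.det_one_add_mul_comm, Matrix.mul_assoc,
      basisCols_transpose_mul hij, Matrix.mul_one, add_sub_cancel, x.2]⟩
  map_one' := by
    apply Subtype.ext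
    simp
  map_mul' x y := by
    apply Subtype.ext
    set P := basisCols i j
    have hP : P.transpose * P = 1 := basisCols_transpose_mul hij
    change 1 + P * (x.1 * y.1 - 1) * P.transpose =
      (1 + P * (x.1 - 1) * P.transpose) * (1 + P * (y.1 - 1) * P.transpose)
    have h1 : P * (x.1 - 1) * P.transpose * (P * (y.1 - 1) * P.transpose) =
        P * ((x.1 - 1) * (y.1 - 1)) * P.transpose := by
      calc _ = P * (x.1 - 1) * (P.transpose * P) * (y.1 - 1) * P.transpose := by
            simp only [Matrix.mul_assoc]
        _ = _ := by simp only [hP, Matrix.mul_one, Matrix.mul_assoc]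
    rw [mul_add, mul_one, add_mul, one_mul, h1]
    have h2 : x.1 * y.1 - 1 = (x.1 - 1) + ((y.1 - 1) + (x.1 - 1) * (y.1 - 1)) := by
      noncomm_ring
    rw [h2, Matrix.mul_add, Matrix.mul_add, Matrix.add_mul, Matrix.add_mul]
    abel

lemma embSL2_apply {i j : Fin n} (hij : i ≠ j) (x : SL 2) (k l : Fin n) :
    (embSL2 hij x : Matrix (Fin n) (Fin n) ℝ) k l = (1 : Matrix (Fin n) (Fin n) ℝ) k l +
      ((if k = i then x.1 0 0 - 1 else 0) * (if l = i then 1 else 0) +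
      (if k = j then x.1 1 0 else 0) * (if l = i then 1 else 0) +
      ((if k = i then x.1 0 1 else 0) * (if l = j then 1 else 0) +
      (if k = j then x.1 1 1 - 1 else 0) * (if l = j then 1 else 0))) := by
  change (1 : Matrix (Fin n) (Fin n) ℝ) k l +
    (basisCols i j * (x.1 - 1) * (basisCols i j).transpose :
      Matrix (Fin n) (Fin n) ℝ) k l = _
  congr 1
  simp only [Matrix.mul_apply, Fin.sum_univ_two, basisCols_zero, basisCols_one,
    Matrix.transpose_apply, Matrix.sub_apply]
  simp
  split_ifs <;> ring

lemma embSL2_upper {i j : Fin n} (hij : i ≠ j) (s : ℝ) :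
    embSL2 hij (upperSL2 s) = Matrix.SpecialLinearGroup.transvection hij s := by
  apply Subtype.ext
  ext k l
  refine (embSL2_apply hij _ k l).trans ?_
  simp only [upperSL2, Matrix.SpecialLinearGroup.transvection, Matrix.transvection,
    Matrix.add_apply, Matrix.single_apply]
  simp [← ite_and, eq_comm, and_comm]

lemma embSL2_lower {i j : Fin n} (hij : i ≠ j) (s : ℝ) :
    embSL2 hij (lowerSL2 s) = Matrix.SpecialLinearGroup.transvection hij.symm s := by
  apply Subtype.ext
  ext k l
  refine (embSL2_apply hij _ k l).trans ?_
  simp only [lowerSL2, Matrix.SpecialLinearGroup.transvection, Matrix.transvection,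
    Matrix.add_apply, Matrix.single_apply]
  simp [← ite_and, eq_comm, and_comm]

lemma embSL2_diag {i j : Fin n} (hij : i ≠ j) (l : ℝ) (hl : l ≠ 0) :
    (embSL2 hij (diagSL2 l hl) : Matrix (Fin n) (Fin n) ℝ) =
      Matrix.diagonal fun k => if k = i then l else if k = j then l⁻¹ else 1 := by
  ext k m
  refine (embSL2_apply hij _ k m).trans ?_
  simp only [diagSL2, Matrix.diagonal_apply, Matrix.one_apply]
  by_cases hkm : k = m
  · subst hkm
    by_cases hi : k = i
    · subst hi
      simp [hij]
    · by_cases hj : k = j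
      · subst hj
        simp [hi]
      · simp [hi, hj]
  · by_cases hi : m = i
    · subst hi
      simp [hkm, hij]
    · by_cases hj : m = j
      · subst hj
        simp [hkm, hi]
      · simp [hkm, hi, hj]

end Embedding

section Generation

variable {n : ℕ}

/-- The homomorphism sending `D` to the diagonal matrix `D` with `i`-th entry divided by `∏ D`. -/
def diagHom (i : Fin n) : (Fin n → ℝˣ) →* SL n where
  toFun D := ⟨Matrix.diagonal fun k => ((D k * if k = i then (∏ m, D m)⁻¹ else 1 : ℝˣ) : ℝ), by
    rw [Matrix.det_diagonal, ← Units.coe_prod, Finset.prod_mul_distrib,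
      Finset.prod_ite_eq' Finset.univ i]
    simp⟩
  map_one' := by
    apply Subtype.ext
    simp
  map_mul' D E := by
    apply Subtype.ext
    change Matrix.diagonal _ = Matrix.diagonal _ * Matrix.diagonal _
    rw [Matrix.diagonal_mul_diagonal]
    congr 1
    ext k
    by_cases hk : k = i
    · simp [hk, Finset.prod_mul_distrib]
      ring
    · simp [hk]

lemma diagHom_mulSingle_self (i : Fin n) (l : ℝˣ) : diagHom i (Pi.mulSingle i l) = 1 := by
  apply Subtype.ext
  change Matrix.diagonal _ = 1
  rw [← Matrix.diagonal_one]
  congr 1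
  ext k
  by_cases hk : k = i
  · subst hk
    simp
  · simp [hk]

lemma diagHom_mulSingle_of_ne {i j : Fin n} (hij : i ≠ j) (l : ℝˣ) :
    diagHom j (Pi.mulSingle i l) = embSL2 hij (diagSL2 l l.ne_zero) := by
  apply Subtype.ext
  refine Eq.trans ?_ (embSL2_diag hij l l.ne_zero).symm
  change Matrix.diagonal _ = _
  congr 1
  ext k
  by_cases hk : k = j
  · subst hk
    simp [hij.symm, Pi.mulSingle_eq_of_ne]
  · by_cases hi : k = i
    · subst hi
      simp [hk]
    · simp [hk, hi]

/-- A subgroup of `SL_n(ℝ)` containing the transvections and the diagonal matrices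
`diag(…, l, …, l⁻¹, …)` is everything. -/
lemma subgroup_eq_top_of_transvection (K : Subgroup (SL n))
    (h1 : ∀ i j (hij : i ≠ j) (s : ℝ), Matrix.SpecialLinearGroup.transvection hij s ∈ K)
    (h2 : ∀ i j (hij : i ≠ j) (l : ℝ) (hl : l ≠ 0), embSL2 hij (diagSL2 l hl) ∈ K) (g : SL n) :
    g ∈ K := by
  suffices h : ∃ h : (g : Matrix (Fin n) (Fin n) ℝ).det = 1, (⟨g, h⟩ : SL n) ∈ K from h.2
  apply Matrix.diagonal_transvection_induction
    (fun A : Matrix (Fin n) (Fin n) ℝ => ∃ h : A.det = 1, (⟨A, h⟩ : SL n) ∈ K)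
  · intro D hD
    have hD1 : (Matrix.diagonal D).det = 1 := hD.trans g.2
    refine ⟨hD1, ?_⟩
    rw [Matrix.det_diagonal] at hD1
    have hne : ∀ k, D k ≠ 0 := fun k => by
      have : ∏ k, D k ≠ 0 := by simp [hD1]
      exact (Finset.prod_ne_zero_iff.mp this) k (Finset.mem_univ k)
    rcases isEmpty_or_nonempty (Fin n) with hn | ⟨⟨i⟩⟩
    · exact (congrArg (· ∈ K) (Subsingleton.elim (α := SL n) _ 1)).mpr K.one_mem
    let E : Fin n → ℝˣ := fun k => Units.mk0 (D k) (hne k)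
    have hE : ∏ k, E k = 1 := by
      apply Units.ext
      simp [E, hD1]
    have hmem : E ∈ K.comap (diagHom i) := by
      refine Subgroup.pi_mem_of_mulSingle_mem E fun k => ?_
      rw [Subgroup.mem_comap]
      by_cases hk : k = i
      · subst hk
        rw [diagHom_mulSingle_self]
        exact K.one_mem
      · rw [diagHom_mulSingle_of_ne hk]
        exact h2 _ _ _ _ _
    rw [Subgroup.mem_comap] at hmem
    refine (congrArg (· ∈ K) (?_ : (_ : SL n) = _)).mpr hmem
    apply Subtype.ext
    change Matrix.diagonal _ = Matrix.diagonal _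
    congr 1
    ext k
    simp [hE, E]
  · intro t
    exact ⟨by simp, h1 t.i t.j t.hij t.c⟩
  · rintro A B ⟨hA, hA'⟩ ⟨hB, hB'⟩
    exact ⟨by rw [Matrix.det_mul, hA, hB, one_mul], K.mul_mem hA' hB'⟩

lemma transvection_commutator {i j k : Fin n} (hik : i ≠ k) (hkj : k ≠ j) (hij : i ≠ j) (s : ℝ) :
    Matrix.SpecialLinearGroup.transvection hik s * Matrix.SpecialLinearGroup.transvection hkj 1 *
      Matrix.SpecialLinearGroup.transvection hik (-s) *
      Matrix.SpecialLinearGroup.transvection hkj (-1) =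
      Matrix.SpecialLinearGroup.transvection hij s := by
  apply Subtype.ext
  change Matrix.transvection i k s * Matrix.transvection k j 1 * Matrix.transvection i k (-s) *
    Matrix.transvection k j (-1) = Matrix.transvection i j s
  simp only [Matrix.transvection, mul_add, add_mul, one_mul, mul_one,
    Matrix.single_mul_single_same, Matrix.single_mul_single_of_ne _ _ _ _ hkj.symm,
    Matrix.single_mul_single_of_ne _ _ _ _ hik.symm, Matrix.single_mul_single_of_ne _ _ _ _ hij.symm,
    Matrix.zero_mul]
  rw [← sub_eq_zero]
  ext a c
  simp [Matrix.single_apply]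
  split_ifs <;> ring

lemma continuous_transvection {i j : Fin n} (hij : i ≠ j) :
    Continuous fun s : ℝ => (Matrix.SpecialLinearGroup.transvection hij s : SL n) := by
  refine continuous_induced_rng.mpr (continuous_matrix fun k l => ?_)
  change Continuous fun s => (1 + Matrix.single i j s : Matrix (Fin n) (Fin n) ℝ) k l
  simp only [Matrix.add_apply, Matrix.single_apply]
  split_ifs <;> fun_prop

end Generation

section Mautner

variable {n : ℕ} {H : Type*} [NormedAddCommGroup H] [InnerProductSpace ℝ H]

/-- Vectors fixed by the expanding root subgroups of a nontrivial diagonal flow are fixed by the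
whole group `SL_n(ℝ)`. -/
lemma fixed_of_expanding_fixed (ρ : SL n →* (H ≃ₗᵢ[ℝ] H))
    (hcont : ∀ v, Tendsto (fun g => ρ g v) (𝓝 1) (𝓝 v)) (b : Fin n → ℝ)
    (hb : ∀ i, ∃ j, b j ≠ b i) {w : H}
    (hw : ∀ i j (hij : i ≠ j), b j < b i → ∀ s : ℝ,
      ρ (Matrix.SpecialLinearGroup.transvection hij s) w = w) (g : SL n) : ρ g w = w := by
  have hcont' : ∀ i j (hij : i ≠ j) v,
      Tendsto (fun r => (ρ.comp (embSL2 hij)) (lowerSL2 r) v) (𝓝 0) (𝓝 v) := by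
    intro i j hij v
    simp only [MonoidHom.comp_apply, embSL2_lower]
    refine (hcont v).comp ?_
    have := (continuous_transvection hij.symm).tendsto 0
    rwa [Matrix.SpecialLinearGroup.transvection_coeff_zero] at this
  have hlow : ∀ i j (hij : i ≠ j),
      (∀ s, ρ (Matrix.SpecialLinearGroup.transvection hij s) w = w) →
      ∀ s, ρ (Matrix.SpecialLinearGroup.transvection hij.symm s) w = w := by
    intro i j hij h s
    rw [← embSL2_lower]
    exact lower_fixed_of_upper_fixed (ρ.comp (embSL2 hij)) (hcont' i j hij)
      (fun s => by rw [MonoidHom.comp_apply, embSL2_upper, h]) s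
  have hne : ∀ i j (hij : i ≠ j), b i ≠ b j → ∀ s,
      ρ (Matrix.SpecialLinearGroup.transvection hij s) w = w := by
    intro i j hij hbij
    rcases lt_or_gt_of_ne hbij with h | h
    · exact hlow j i hij.symm (hw j i hij.symm h)
    · exact hw i j hij h
  have hall : ∀ i j (hij : i ≠ j) (s : ℝ),
      ρ (Matrix.SpecialLinearGroup.transvection hij s) w = w := by
    intro i j hij s
    by_cases hbij : b i = b j
    · obtain ⟨k, hk⟩ := hb i
      have hik : i ≠ k := fun h => hk (by rw [h])
      have hkj : k ≠ j := fun h => hk (by rw [h, hbij])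
      have e1 := hne i k hik hk.symm
      have e2 := hne k j hkj (hbij ▸ hk)
      rw [← transvection_commutator hik hkj hij s]
      simp only [rep_mul_apply, e1, e2]
    · exact hne i j hij hbij s
  let K : Subgroup (SL n) :=
    { carrier := {g | ρ g w = w}
      one_mem' := by simp
      mul_mem' := fun {x y} hx hy => by
        simp only [Set.mem_ofPred_eq] at *
        rw [rep_mul_apply, hy, hx]
      inv_mem' := fun {x} hx => by
        simp only [Set.mem_ofPred_eq] at *
        nth_rewrite 1 [← hx]
        rw [← rep_mul_apply, inv_mul_cancel, map_one]
        rfl }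
  refine subgroup_eq_top_of_transvection K hall (fun i j hij l hl => ?_) g
  exact diag_fixed_of_upper_fixed (ρ.comp (embSL2 hij)) (hcont' i j hij)
      (fun s => by rw [MonoidHom.comp_apply, embSL2_upper, hall]) l hl

end Mautner

section Normalization

variable {n : ℕ}

/-- The matrix with entries given by a vector indexed by pairs. -/
def toMat (v : Fin n × Fin n → ℝ) : Matrix (Fin n) (Fin n) ℝ := Matrix.of fun i j => v (i, j)

lemma continuous_toMat : Continuous (toMat (n := n)) :=
  continuous_matrix fun i j => continuous_apply (i, j)

/-- Dividing the row `i` of an invertible matrix by the determinant gives a map to `SL_n(ℝ)`;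
singular matrices are sent to `1`. -/
def normSL (i : Fin n) (A : Matrix (Fin n) (Fin n) ℝ) : SL n :=
  if h : A.det ≠ 0 then
    ⟨Matrix.diagonal (Function.update 1 i A.det⁻¹) * A, by
      rw [Matrix.det_mul, Matrix.det_diagonal, Finset.prod_update_of_mem (Finset.mem_univ i)]
      simp [h]⟩
  else 1

lemma coe_normSL (i : Fin n) {A : Matrix (Fin n) (Fin n) ℝ} (h : A.det ≠ 0) :
    (normSL i A : Matrix (Fin n) (Fin n) ℝ) =
      Matrix.diagonal (Function.update 1 i A.det⁻¹) * A := by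
  exact congrArg (fun g : SL n => (g : Matrix (Fin n) (Fin n) ℝ)) (dif_pos (c := A.det ≠ 0) h)

lemma normSL_mul (i : Fin n) {A : Matrix (Fin n) (Fin n) ℝ} (h : A.det ≠ 0) (g : SL n) :
    normSL i (A * g) = normSL i A * g := by
  have h' : (A * (g : Matrix (Fin n) (Fin n) ℝ)).det ≠ 0 := by
    rwa [Matrix.det_mul, g.2, mul_one]
  apply Subtype.ext
  refine (coe_normSL i h').trans ?_
  refine Eq.trans ?_ (congrArg (· * (g : Matrix (Fin n) (Fin n) ℝ)) (coe_normSL i h)).symm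
  simp only [Matrix.det_mul, g.2, mul_one, Matrix.mul_assoc]

lemma normSL_one (i : Fin n) : normSL i (1 : Matrix (Fin n) (Fin n) ℝ) = 1 := by
  apply Subtype.ext
  refine (coe_normSL i (by simp)).trans ?_
  have : Function.update (1 : Fin n → ℝ) i 1 = 1 := Function.update_eq_self i 1
  simp [this]

lemma continuousOn_normSL (i : Fin n) :
    ContinuousOn (normSL i) {A : Matrix (Fin n) (Fin n) ℝ | A.det ≠ 0} := by
  rw [continuousOn_iff_continuous_domRestrict]
  refine continuous_induced_rng.mpr ?_
  have : (fun g : SL n => (g : Matrix (Fin n) (Fin n) ℝ)) ∘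
      (Set.domRestrict {A : Matrix (Fin n) (Fin n) ℝ | A.det ≠ 0} (normSL i)) =
      fun A => Matrix.diagonal (Function.update 1 i A.1.det⁻¹) * A.1 := by
    ext A : 1
    exact coe_normSL i A.2
  rw [this]
  refine Continuous.matrix_mul (Continuous.matrix_diagonal ?_) continuous_subtype_val
  refine continuous_const.update i ?_
  exact Continuous.inv₀ continuous_subtype_val.matrix_det fun A => A.2

lemma isOpen_det_toMat_ne_zero :
    IsOpen {v : Fin n × Fin n → ℝ | (toMat v).det ≠ 0} :=
  isOpen_ne_fun continuous_toMat.matrix_det continuous_const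

lemma measurable_normSL (i : Fin n) : Measurable fun v => normSL i (toMat v) := by
  refine measurable_of_restrict_of_restrict_compl (isOpen_det_toMat_ne_zero).measurableSet ?_ ?_
  · refine Continuous.measurable ?_
    rw [← continuousOn_iff_continuous_domRestrict]
    exact (continuousOn_normSL i).comp continuous_toMat.continuousOn fun v hv => hv
  · have : Set.domRestrict {v : Fin n × Fin n → ℝ | (toMat v).det ≠ 0}ᶜ
        (fun v => normSL i (toMat v)) = fun _ => 1 := by
      ext v : 1
      exact dif_neg v.2
    rw [this]
    exact measurable_const

/-- Right multiplication by an element of `SL_n(ℝ)` in coordinates. -/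
def mulRightVec (g : SL n) : (Fin n × Fin n → ℝ) ≃ₗ[ℝ] (Fin n × Fin n → ℝ) where
  toFun v p := (toMat v * (g : Matrix (Fin n) (Fin n) ℝ)) p.1 p.2
  invFun v p := (toMat v * ((g⁻¹ : SL n) : Matrix (Fin n) (Fin n) ℝ)) p.1 p.2
  map_add' v w := by
    ext p
    simp [toMat, Matrix.mul_apply, add_mul, Finset.sum_add_distrib]
  map_smul' c v := by
    ext p
    simp [toMat, Matrix.mul_apply, mul_assoc, Finset.mul_sum]
  left_inv v := by
    ext p
    change (toMat v * (g : Matrix (Fin n) (Fin n) ℝ) * ((g⁻¹ : SL n) : Matrix (Fin n) (Fin n) ℝ) :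
      Matrix (Fin n) (Fin n) ℝ) p.1 p.2 = _
    rw [Matrix.mul_assoc, ← Matrix.SpecialLinearGroup.coe_mul, mul_inv_cancel,
      Matrix.SpecialLinearGroup.coe_one, Matrix.mul_one]
    rfl
  right_inv v := by
    ext p
    change (toMat v * ((g⁻¹ : SL n) : Matrix (Fin n) (Fin n) ℝ) * (g : Matrix (Fin n) (Fin n) ℝ) :
      Matrix (Fin n) (Fin n) ℝ) p.1 p.2 = _
    rw [Matrix.mul_assoc, ← Matrix.SpecialLinearGroup.coe_mul, inv_mul_cancel,
      Matrix.SpecialLinearGroup.coe_one, Matrix.mul_one]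
    rfl

lemma toMat_mulRightVec (g : SL n) (v : Fin n × Fin n → ℝ) :
    toMat (mulRightVec g v) = toMat v * (g : Matrix (Fin n) (Fin n) ℝ) := rfl

lemma quasiMeasurePreserving_mulRightVec (g : SL n) :
    Measure.QuasiMeasurePreserving (mulRightVec g) volume volume := by
  have hm : Measurable (mulRightVec g) :=
    (LinearMap.continuous_of_finiteDimensional (mulRightVec g).toLinearMap).measurable
  refine ⟨hm, Measure.AbsolutelyContinuous.mk fun s hs h0 => ?_⟩
  rw [Measure.map_apply hm hs]
  have := Measure.addHaar_preimage_linearMap volume (f := (mulRightVec g).toLinearMap)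
    (LinearEquiv.isUnit_det' _).ne_zero s
  rw [h0, mul_zero] at this
  exact this

/-- Whether an orbit map avoids a set almost everywhere does not depend on the base point. -/
lemma ae_normSL_smul_notMem (i : Fin n) {E : Set (SL n ⧸ intSL n)} {y : SL n ⧸ intSL n}
    (h : ∀ᵐ v : Fin n × Fin n → ℝ, (toMat v).det ≠ 0 → normSL i (toMat v) • y ∉ E)
    (x : SL n ⧸ intSL n) :
    ∀ᵐ v : Fin n × Fin n → ℝ, (toMat v).det ≠ 0 → normSL i (toMat v) • x ∉ E := by
  obtain ⟨g, rfl⟩ := MulAction.exists_smul_eq (SL n) y x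
  filter_upwards [(quasiMeasurePreserving_mulRightVec g).ae h] with v hv hdet
  rw [toMat_mulRightVec, normSL_mul i hdet, mul_smul, Matrix.det_mul, g.2, mul_one] at hv
  exact hv hdet

end Normalization

section Ergodicity

variable {n : ℕ} [MeasurableSpace (SL n ⧸ intSL n)] [BorelSpace (SL n ⧸ intSL n)]
  (μ : Measure (SL n ⧸ intSL n)) [IsProbabilityMeasure μ]

lemma measurable_normSL_smul (i : Fin n) :
    Measurable fun q : (Fin n × Fin n → ℝ) × (SL n ⧸ intSL n) => normSL i (toMat q.1) • q.2 :=
  ((measurable_normSL i).comp measurable_fst).smul measurable_snd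

variable [SMulInvariantMeasure (SL n) (SL n ⧸ intSL n) μ]

lemma ae_normSL_smul_notMem_of_null (i : Fin n) {E : Set (SL n ⧸ intSL n)}
    (hE : MeasurableSet E) (h0 : μ E = 0) (x : SL n ⧸ intSL n) :
    ∀ᵐ v : Fin n × Fin n → ℝ, (toMat v).det ≠ 0 → normSL i (toMat v) • x ∉ E := by
  have h1 : ∀ᵐ v : Fin n × Fin n → ℝ, ∀ᵐ y ∂μ, normSL i (toMat v) • y ∉ E := by
    refine Eventually.of_forall fun v => ?_
    rw [ae_iff]
    simp only [not_not]
    exact (measure_preimage_smul μ (normSL i (toMat v)) E).trans h0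
  have hm : MeasurableSet {q : (Fin n × Fin n → ℝ) × (SL n ⧸ intSL n) |
      normSL i (toMat q.1) • q.2 ∉ E} := measurable_normSL_smul i hE.compl
  rw [Measure.ae_ae_comm hm] at h1
  obtain ⟨y, hy⟩ := h1.exists
  exact ae_normSL_smul_notMem i (hy.mono fun v hv _ => hv) x

lemma null_of_ae_normSL_smul_notMem (i : Fin n) {E : Set (SL n ⧸ intSL n)}
    (hE : MeasurableSet E) {y : SL n ⧸ intSL n}
    (h : ∀ᵐ v : Fin n × Fin n → ℝ, (toMat v).det ≠ 0 → normSL i (toMat v) • y ∉ E) :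
    μ E = 0 := by
  have h1 : ∀ᵐ z ∂μ, ∀ᵐ v : Fin n × Fin n → ℝ,
      (toMat v).det ≠ 0 → normSL i (toMat v) • z ∉ E :=
    Eventually.of_forall fun z => ae_normSL_smul_notMem i h z
  have hm : MeasurableSet {q : (SL n ⧸ intSL n) × (Fin n × Fin n → ℝ) |
      (toMat q.2).det ≠ 0 → normSL i (toMat q.2) • q.1 ∉ E} :=
    MeasurableSet.imp (isOpen_det_toMat_ne_zero.measurableSet.preimage measurable_snd)
      (((measurable_normSL_smul i).comp measurable_swap) hE.compl)
  rw [Measure.ae_ae_comm hm] at h1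
  have h2 : ∃ᵐ v : Fin n × Fin n → ℝ, (toMat v).det ≠ 0 := by
    rw [frequently_ae_iff]
    refine (isOpen_det_toMat_ne_zero.measure_pos volume ⟨fun p => if p.1 = p.2 then 1 else 0, ?_⟩).ne'
    have : toMat (fun p : Fin n × Fin n => if p.1 = p.2 then (1 : ℝ) else 0) = 1 := rfl
    simp [this]
  obtain ⟨v, hv, hv'⟩ := (h2.and_eventually h1).exists
  rw [← measure_preimage_smul μ (normSL i (toMat v)) E]
  refine measure_mono_null (fun z hz => ?_) (ae_iff.mp hv')
  exact fun h => h hv hz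

/-- The action of `SL_n(ℝ)` on the quotient is ergodic. -/
lemma exists_ae_eq_const (i : Fin n) {w : SL n ⧸ intSL n → ℝ} (hw : Measurable w)
    (h : ∀ g : SL n, ∀ᵐ y ∂μ, w (g • y) = w y) : ∃ c, ∀ᵐ y ∂μ, w y = c := by
  have h1 : ∀ᵐ v : Fin n × Fin n → ℝ, ∀ᵐ y ∂μ, w (normSL i (toMat v) • y) = w y :=
    Eventually.of_forall fun v => h _
  have hm : MeasurableSet {q : (Fin n × Fin n → ℝ) × (SL n ⧸ intSL n) |
      w (normSL i (toMat q.1) • q.2) = w q.2} :=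
    measurableSet_eq_fun (hw.comp (measurable_normSL_smul i)) (hw.comp measurable_snd)
  rw [Measure.ae_ae_comm hm] at h1
  obtain ⟨y, hy⟩ := h1.exists
  refine ⟨w y, ?_⟩
  rw [ae_iff]
  refine null_of_ae_normSL_smul_notMem μ i (y := y) ?_ ?_
  · exact (measurableSet_eq_fun hw measurable_const).compl
  · exact hy.mono fun v hv _ => not_not.mpr hv

end Ergodicity

section Contraction

variable {n : ℕ}

/-- Conjugation by `a_t` contracts the expanded root subgroups. -/
lemma tendsto_aSL_conj_transvection (b : Fin n → ℝ) (hsum : ∑ i, b i = 0) {i j : Fin n}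
    (hij : i ≠ j) (hlt : b j < b i) (s : ℝ) :
    Tendsto (fun t => (aSL b hsum t)⁻¹ * Matrix.SpecialLinearGroup.transvection hij s *
      aSL b hsum t) atTop (𝓝 1) := by
  have key : ∀ t, (aSL b hsum t)⁻¹ * Matrix.SpecialLinearGroup.transvection hij s *
      aSL b hsum t =
      Matrix.SpecialLinearGroup.transvection hij (Real.exp ((b j - b i) * t) * s) := by
    intro t
    rw [mul_assoc, inv_mul_eq_iff_eq_mul]
    apply Subtype.ext
    change Matrix.transvection i j s * Matrix.diagonal _ =
      Matrix.diagonal _ * Matrix.transvection i j _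
    ext k l
    rw [Matrix.mul_diagonal, Matrix.diagonal_mul]
    simp only [Matrix.transvection, Matrix.add_apply, Matrix.one_apply, Matrix.single_apply]
    by_cases hkl : k = l
    · subst hkl
      have : ¬ (i = k ∧ j = k) := fun h => hij (h.1.trans h.2.symm)
      simp [this]
    · by_cases h : i = k ∧ j = l
      · obtain ⟨rfl, rfl⟩ := h
        simp only [hkl, and_self, if_true, if_false, zero_add]
        rw [← mul_assoc, ← Real.exp_add, mul_comm s]
        congr 2
        ring
      · simp [hkl, h]
  simp only [key]
  have h0 : Tendsto (fun t : ℝ => Real.exp ((b j - b i) * t) * s) atTop (𝓝 0) := by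
    have : Tendsto (fun t : ℝ => (b j - b i) * t) atTop atBot :=
      tendsto_id.const_mul_atTop_of_neg (sub_neg.mpr hlt)
    simpa using (Real.tendsto_exp_atBot.comp this).mul_const s
  have := ((continuous_transvection hij).tendsto 0).comp h0
  rwa [Matrix.SpecialLinearGroup.transvection_coeff_zero] at this

lemma exists_ne_of_sum_eq_zero {b : Fin n → ℝ} (hsum : ∑ i, b i = 0) (hb : b ≠ 0) (i : Fin n) :
    ∃ j, b j ≠ b i := by
  by_contra! h
  have h1 : ∑ j, b j = n * b i := by simp [h]
  have hn : (n : ℝ) ≠ 0 := Nat.cast_ne_zero.mpr (Nat.pos_of_ne_zero (by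
    rintro rfl; exact i.elim0)).ne'
  have h2 : b i = 0 := by
    rw [hsum] at h1
    exact (mul_eq_zero.mp h1.symm).resolve_left hn
  exact hb (funext fun j => by rw [h j, h2, Pi.zero_apply])

end Contraction

section Mixing

variable {n : ℕ} [MeasurableSpace (SL n ⧸ intSL n)] [BorelSpace (SL n ⧸ intSL n)]
  (μ : Measure (SL n ⧸ intSL n)) [SMulInvariantMeasure (SL n) (SL n ⧸ intSL n) μ]

/-- The Koopman representation of `SL_n(ℝ)` on `L²`. -/
def lpRep : SL n →* (Lp ℝ 2 μ ≃ₗᵢ[ℝ] Lp ℝ 2 μ) where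
  toFun g :=
    { toFun := fun f => DomMulAct.mk g⁻¹ • f
      invFun := fun f => DomMulAct.mk g • f
      map_add' := fun f f' => smul_add _ f f'
      map_smul' := fun c f => smul_comm _ c f
      left_inv := fun f => by
        beta_reduce
        rw [smul_smul, ← DomMulAct.mk_mul, inv_mul_cancel, DomMulAct.mk_one, one_smul]
      right_inv := fun f => by
        beta_reduce
        rw [smul_smul, ← DomMulAct.mk_mul, mul_inv_cancel, DomMulAct.mk_one, one_smul]
      norm_map' := fun f => DomMulAct.norm_smul_Lp _ f }
  map_one' := by
    ext1 f
    change DomMulAct.mk (1 : SL n)⁻¹ • f = f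
    rw [inv_one, DomMulAct.mk_one, one_smul]
  map_mul' g h := by
    ext1 f
    change DomMulAct.mk (g * h)⁻¹ • f = DomMulAct.mk g⁻¹ • DomMulAct.mk h⁻¹ • f
    rw [smul_smul, ← DomMulAct.mk_mul, mul_inv_rev]

lemma lpRep_apply (g : SL n) (f : Lp ℝ 2 μ) : lpRep μ g f = DomMulAct.mk g⁻¹ • f := rfl

variable [IsProbabilityMeasure μ]

lemma tendsto_lpRep (f : Lp ℝ 2 μ) : Tendsto (fun g => lpRep μ g f) (𝓝 1) (𝓝 f) := by
  have : Fact ((2 : ENNReal) ≠ ⊤) := ⟨by simp⟩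
  have h : Continuous fun g : SL n => lpRep μ g f :=
    (DomMulAct.continuous_mk.comp continuous_inv).smul continuous_const
  simpa using h.tendsto 1

lemma exists_eq_const_of_lpRep_eq [NeZero n] {w : Lp ℝ 2 μ} (hw : ∀ g, lpRep μ g w = w) :
    ∃ c, w =ᵐ[μ] fun _ => c := by
  obtain ⟨w', hw', hww'⟩ := (Lp.aestronglyMeasurable w).aemeasurable
  have hinv : ∀ g : SL n, ∀ᵐ y ∂μ, w' (g • y) = w' y := by
    intro g
    have h1 : (lpRep μ g⁻¹ w : SL n ⧸ intSL n → ℝ) =ᵐ[μ] fun y => w (g • y) := by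
      rw [lpRep_apply, inv_inv]
      exact DomMulAct.smul_Lp_ae_eq _ _
    rw [hw] at h1
    have h2 : ∀ᵐ y ∂μ, w (g • y) = w' (g • y) :=
      (measurePreserving_smul g μ).quasiMeasurePreserving.ae hww'
    filter_upwards [h1, h2, hww'] with y e1 e2 e3
    rw [← e2, ← e1, e3]
  obtain ⟨c, hc⟩ := exists_ae_eq_const μ (0 : Fin n) hw' hinv
  exact ⟨c, hww'.trans hc⟩

variable [NeZero n] {b : Fin n → ℝ} (hsum : ∑ i, b i = 0)

/-- Mixing of the flow `a_t`. -/
lemma tendsto_inner_lpRep (hb : b ≠ 0) (f h : Lp ℝ 2 μ) :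
    Tendsto (fun t => inner ℝ (lpRep μ (aSL b hsum t) f) h) atTop
      (𝓝 ((∫ y, f y ∂μ) * ∫ y, h y ∂μ)) := by
  rw [tendsto_iff_ultrafilter]
  intro F hF
  obtain ⟨w, hw, hfix⟩ := exists_weak_limit (lpRep μ) (tendsto_lpRep μ) (aSL b hsum) F f
  obtain ⟨c, hc⟩ := exists_eq_const_of_lpRep_eq μ (w := w) fun g =>
    fixed_of_expanding_fixed (lpRep μ) (tendsto_lpRep μ) b (exists_ne_of_sum_eq_zero hsum hb)
      (fun i j hij hlt s =>
        hfix _ ((tendsto_aSL_conj_transvection b hsum hij hlt s).mono_left hF)) g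
  have hwi : ∀ v : Lp ℝ 2 μ, inner ℝ w v = c * ∫ y, v y ∂μ := by
    intro v
    rw [L2.inner_def, ← integral_const_mul]
    refine integral_congr_ae (hc.mono fun y hy => ?_)
    simp [hy, mul_comm]
  have hone : ∀ v : Lp ℝ 2 μ, inner ℝ v (Lp.const 2 μ (1 : ℝ)) = ∫ y, v y ∂μ := by
    intro v
    rw [L2.inner_def]
    exact integral_congr_ae (Eventually.of_forall fun y => by simp)
  have hcf : c = ∫ y, f y ∂μ := by
    have h1 := hw (Lp.const 2 μ (1 : ℝ))
    have h2 : ∀ t, inner ℝ (lpRep μ (aSL b hsum t) f) (Lp.const 2 μ (1 : ℝ)) = ∫ y, f y ∂μ := by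
      intro t
      rw [← hone f, ← inner_rep_inv, lpRep_apply, DomMulAct.smul_Lp_const]
    simp only [h2] at h1
    have h3 := tendsto_nhds_unique h1 tendsto_const_nhds
    rw [hone, integral_congr_ae hc] at h3
    simpa using h3
  rw [← hcf, ← hwi]
  exact hw h

lemma tendsto_integral_mul_comp_aSL (hb : b ≠ 0) {f h : SL n ⧸ intSL n → ℝ} (hf : MemLp f 2 μ)
    (hh : MemLp h 2 μ) :
    Tendsto (fun t => ∫ y, f y * h (aSL b hsum t • y) ∂μ) atTop
      (𝓝 ((∫ y, f y ∂μ) * ∫ y, h y ∂μ)) := by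
  have := tendsto_inner_lpRep μ hsum hb (hf.toLp f) (hh.toLp h)
  rw [integral_congr_ae hf.coeFn_toLp, integral_congr_ae hh.coeFn_toLp] at this
  refine this.congr fun t => ?_
  rw [← inner_rep_inv, L2.inner_def]
  refine integral_congr_ae ?_
  have h1 : (lpRep μ (aSL b hsum t)⁻¹ (hh.toLp h) : SL n ⧸ intSL n → ℝ) =ᵐ[μ]
      fun y => hh.toLp h (aSL b hsum t • y) := by
    rw [lpRep_apply, inv_inv]
    exact DomMulAct.smul_Lp_ae_eq _ _
  have h2 : ∀ᵐ y ∂μ, hh.toLp h (aSL b hsum t • y) = h (aSL b hsum t • y) :=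
    (measurePreserving_smul (aSL b hsum t) μ).quasiMeasurePreserving.ae hh.coeFn_toLp
  filter_upwards [h1, h2, hf.coeFn_toLp] with y e1 e2 e3
  rw [e1, e2, e3]
  simp [mul_comm]

lemma tendsto_integral_comp_aSL_of_absolutelyContinuous (hb : b ≠ 0)
    (ν : Measure (SL n ⧸ intSL n)) [IsFiniteMeasure ν] (hν : ν ≪ μ)
    (h : BoundedContinuousFunction (SL n ⧸ intSL n) ℝ) :
    Tendsto (fun t => ∫ y, h (aSL b hsum t • y) ∂ν) atTop
      (𝓝 (ν.real Set.univ * ∫ y, h y ∂μ)) := by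
  set r := fun y => (ν.rnDeriv μ y).toReal with hr
  have hri : Integrable r μ := Measure.integrable_toReal_rnDeriv
  have hrν : ∫ y, r y ∂μ = ν.real Set.univ := Measure.integral_toReal_rnDeriv hν
  have hhm : ∀ t, AEStronglyMeasurable (fun y => h (aSL b hsum t • y)) μ := fun t =>
    (h.continuous.comp (continuous_const_smul _)).aestronglyMeasurable
  have hC : ∀ y, ‖h y‖ ≤ ‖h‖ := h.norm_coe_le_norm
  rw [Metric.tendsto_atTop]
  intro ε hε
  set C := ‖h‖ + 1 with hCdef
  have hCpos : 0 < C := by positivity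
  obtain ⟨q, hq, hqi⟩ := hri.exists_boundedContinuous_integral_sub_le
    (show 0 < ε / (4 * C) by positivity)
  have hqm : MemLp q 2 μ := MemLp.of_bound q.continuous.aestronglyMeasurable ‖q‖
    (Eventually.of_forall q.norm_coe_le_norm)
  have hhm2 : MemLp h 2 μ := MemLp.of_bound h.continuous.aestronglyMeasurable ‖h‖
    (Eventually.of_forall hC)
  have hlim := tendsto_integral_mul_comp_aSL μ hsum hb hqm hhm2
  rw [Metric.tendsto_atTop] at hlim
  obtain ⟨T, hT⟩ := hlim (ε / 2) (by positivity)
  have hbound : ∀ k : SL n ⧸ intSL n → ℝ, AEStronglyMeasurable k μ → (∀ y, ‖k y‖ ≤ C) →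
      |(∫ y, r y * k y ∂μ) - ∫ y, q y * k y ∂μ| ≤ ε / 4 := by
    intro k hk hkC
    have hkC' := Eventually.of_forall (f := ae μ) hkC
    rw [← integral_sub (hri.mul_bdd hk hkC') (hqi.mul_bdd hk hkC')]
    rw [← Real.norm_eq_abs]
    refine (norm_integral_le_integral_norm _).trans ?_
    calc ∫ y, ‖r y * k y - q y * k y‖ ∂μ ≤ ∫ y, ‖r y - q y‖ * C ∂μ := by
          refine integral_mono_of_nonneg (Eventually.of_forall fun y => norm_nonneg _)
            ((hri.sub hqi).norm.mul_const C) (Eventually.of_forall fun y => ?_)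
          simp only
          rw [← sub_mul, norm_mul]
          exact mul_le_mul_of_nonneg_left (hkC y) (norm_nonneg _)
      _ ≤ ε / (4 * C) * C := by
          rw [integral_mul_const]
          exact mul_le_mul_of_nonneg_right hq hCpos.le
      _ = ε / 4 := by field_simp
  refine ⟨T, fun t ht => ?_⟩
  have e1 : ∫ y, h (aSL b hsum t • y) ∂ν = ∫ y, r y * h (aSL b hsum t • y) ∂μ := by
    rw [← integral_rnDeriv_smul hν]
    rfl
  have b1 := hbound _ (hhm t) fun y => (hC _).trans (by simp [hCdef])
  have b2 := hbound (fun _ => ∫ y, h y ∂μ) aestronglyMeasurable_const fun _ => by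
    refine (norm_integral_le_of_norm_le_const (Eventually.of_forall hC)).trans ?_
    simp [hCdef]
  rw [integral_mul_const, integral_mul_const, hrν] at b2
  have b3 := hT t ht
  rw [Real.dist_eq] at b3 ⊢
  rw [e1]
  rw [abs_le] at b1 b2
  rw [abs_lt] at b3 ⊢
  constructor <;> linarith [b1.1, b1.2, b2.1, b2.2, b3.1, b3.2]

end Mixing

section LowerUpper

variable {n : ℕ}

/-- Index type of the lower-triangular coordinates, diagonal included. -/
abbrev LowIdx (n : ℕ) := {p : Fin n × Fin n // ¬ p.1 < p.2}

/-- The lower-triangular matrix with entries `d`. -/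
def lowMat (d : LowIdx n → ℝ) : Matrix (Fin n) (Fin n) ℝ :=
  Matrix.of fun i j => if h : i < j then 0 else d ⟨(i, j), h⟩

/-- The strictly upper-triangular matrix with entries `c`. -/
def strictMat (c : TriIdx n → ℝ) : Matrix (Fin n) (Fin n) ℝ :=
  Matrix.of fun i j => if h : i < j then c ⟨(i, j), h⟩ else 0

lemma uMat_eq_one_add (c : TriIdx n → ℝ) : uMat c = 1 + strictMat c := by
  ext i j
  simp only [uMat, strictMat, Matrix.add_apply, Matrix.one_apply, Matrix.of_apply]
  by_cases h : i = j
  · simp [h]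
  · simp [h]

lemma lowMat_blockTriangular (d : LowIdx n → ℝ) :
    (lowMat d).BlockTriangular OrderDual.toDual := fun _ _ hij =>
  dif_pos (OrderDual.toDual_lt_toDual.mp hij)

lemma det_lowMat (d : LowIdx n → ℝ) :
    (lowMat d).det = ∏ i, d ⟨(i, i), lt_irrefl i⟩ := by
  rw [Matrix.det_of_isLowerTriangular _ (lowMat_blockTriangular d)]
  exact Finset.prod_congr rfl fun i _ => dif_neg (lt_irrefl i)

lemma uMat_blockTriangular (c : TriIdx n → ℝ) : (uMat c).BlockTriangular id := by
  intro i j hij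
  have h1 : ¬ i = j := fun h => absurd hij (by simp [h])
  have h2 : ¬ i < j := fun h => absurd (lt_trans h hij) (lt_irrefl _)
  simp [uMat, h1, h2]

/-- Uniqueness in the infinitesimal lower-upper decomposition. -/
lemma eq_zero_of_lowMat_mul_uMat_eq {d d' : LowIdx n → ℝ} {c c' : TriIdx n → ℝ}
    (hd : ∀ i, d ⟨(i, i), lt_irrefl i⟩ ≠ 0)
    (h : lowMat d' * uMat c = lowMat d * strictMat c') : d' = 0 ∧ c' = 0 := by
  have hdet : IsUnit (lowMat d).det := by
    rw [det_lowMat]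
    exact (Finset.prod_ne_zero_iff.mpr fun i _ => hd i).isUnit
  have hudet : IsUnit (uMat c).det := by simp [uMat_det]
  let _ := Matrix.invertibleOfIsUnitDet _ hdet
  let _ := Matrix.invertibleOfIsUnitDet _ hudet
  have hD : (lowMat d)⁻¹ * lowMat d' = strictMat c' * (uMat c)⁻¹ := by
    have h2 : (lowMat d)⁻¹ * (lowMat d' * uMat c) * (uMat c)⁻¹ =
        (lowMat d)⁻¹ * (lowMat d * strictMat c') * (uMat c)⁻¹ := by rw [h]
    rwa [← Matrix.mul_assoc, Matrix.mul_nonsing_inv_cancel_right _ _ hudet,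
      Matrix.nonsing_inv_mul_cancel_left _ _ hdet] at h2
  have hlow := (Matrix.blockTriangular_inv_of_blockTriangular (lowMat_blockTriangular d)).mul
    (lowMat_blockTriangular d')
  have hup := Matrix.blockTriangular_inv_of_blockTriangular (uMat_blockTriangular c)
  have hzero : (lowMat d)⁻¹ * lowMat d' = 0 := by
    ext i j
    by_cases hij : i < j
    · exact hlow hij
    · rw [hD, Matrix.mul_apply]
      refine Finset.sum_eq_zero fun k _ => ?_
      by_cases hik : i < k
      · rw [hup (lt_of_le_of_lt (not_lt.mp hij) hik), mul_zero]
      · simp [strictMat, hik]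
  have h1 : lowMat d' = 0 := by
    rw [← Matrix.mul_nonsing_inv_cancel_left (lowMat d) (lowMat d') hdet, hzero, Matrix.mul_zero]
  have h2 : strictMat c' = 0 := by
    rw [← Matrix.nonsing_inv_mul_cancel_right (uMat c) (strictMat c') hudet, ← hD, hzero,
      Matrix.zero_mul]
  constructor
  · ext ⟨⟨i, j⟩, hp⟩
    have := congrFun (congrFun h1 i) j
    rwa [lowMat, Matrix.of_apply, dif_neg hp] at this
  · ext ⟨⟨i, j⟩, hp⟩
    have := congrFun (congrFun h2 i) j
    rwa [strictMat, Matrix.of_apply, dif_pos hp] at this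

/-- The coordinates of `v` on and below the diagonal. -/
def lowPart : (Fin n × Fin n → ℝ) →ₗ[ℝ] (LowIdx n → ℝ) := LinearMap.funLeft ℝ ℝ Subtype.val

/-- The coordinates of `v` above the diagonal. -/
def upPart : (Fin n × Fin n → ℝ) →ₗ[ℝ] (TriIdx n → ℝ) := LinearMap.funLeft ℝ ℝ Subtype.val

lemma eq_zero_of_parts {v : Fin n × Fin n → ℝ} (h1 : lowPart v = 0) (h2 : upPart v = 0) :
    v = 0 := by
  ext p
  by_cases hp : p.1 < p.2
  · exact congrFun h2 ⟨p, hp⟩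
  · exact congrFun h1 ⟨p, hp⟩

lemma lowMat_sub (d d' : LowIdx n → ℝ) : lowMat (d - d') = lowMat d - lowMat d' := by
  ext i j
  by_cases h : i < j <;> simp [lowMat, h]

lemma lowMat_add (d d' : LowIdx n → ℝ) : lowMat (d + d') = lowMat d + lowMat d' := by
  ext i j
  by_cases h : i < j <;> simp [lowMat, h]

lemma lowMat_smul (r : ℝ) (d : LowIdx n → ℝ) : lowMat (r • d) = r • lowMat d := by
  ext i j
  by_cases h : i < j <;> simp [lowMat, h]

lemma strictMat_sub (c c' : TriIdx n → ℝ) : strictMat (c - c') = strictMat c - strictMat c' := by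
  ext i j
  by_cases h : i < j <;> simp [strictMat, h]

lemma strictMat_add (c c' : TriIdx n → ℝ) : strictMat (c + c') = strictMat c + strictMat c' := by
  ext i j
  by_cases h : i < j <;> simp [strictMat, h]

lemma strictMat_smul (r : ℝ) (c : TriIdx n → ℝ) : strictMat (r • c) = r • strictMat c := by
  ext i j
  by_cases h : i < j <;> simp [strictMat, h]

/-- The product of the lower-triangular and the unipotent upper-triangular parts of `v`. -/
def mulParts (v : Fin n × Fin n → ℝ) : Fin n × Fin n → ℝ :=
  fun p => (lowMat (lowPart v) * uMat (upPart v)) p.1 p.2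

lemma toMat_mulParts (v : Fin n × Fin n → ℝ) :
    toMat (mulParts v) = lowMat (lowPart v) * uMat (upPart v) := rfl

/-- The derivative of `mulParts`. -/
def mulPartsDeriv (v : Fin n × Fin n → ℝ) : (Fin n × Fin n → ℝ) →L[ℝ] (Fin n × Fin n → ℝ) :=
  LinearMap.toContinuousLinearMap
    { toFun := fun w p => (lowMat (lowPart w) * uMat (upPart v) +
        lowMat (lowPart v) * strictMat (upPart w)) p.1 p.2
      map_add' := fun w w' => by
        ext p
        rw [map_add, map_add, lowMat_add, strictMat_add, Matrix.add_mul, Matrix.mul_add]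
        simp only [Matrix.add_apply, Pi.add_apply]
        ring
      map_smul' := fun r w => by
        ext p
        rw [map_smul, map_smul, lowMat_smul, strictMat_smul, Matrix.smul_mul, Matrix.mul_smul,
          ← smul_add]
        rfl }

lemma mulPartsDeriv_apply (v w : Fin n × Fin n → ℝ) (p : Fin n × Fin n) :
    mulPartsDeriv v w p = (lowMat (lowPart w) * uMat (upPart v) +
        lowMat (lowPart v) * strictMat (upPart w)) p.1 p.2 := rfl

lemma hasFDerivAt_mulParts (v : Fin n × Fin n → ℝ) :
    HasFDerivAt mulParts (mulPartsDeriv v) v := by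
  have hl : ∀ i k, ∃ l : (Fin n × Fin n → ℝ) →L[ℝ] ℝ, ∀ w, lowMat (lowPart w) i k = l w := by
    intro i k
    by_cases h : i < k
    · exact ⟨0, fun w => dif_pos h⟩
    · exact ⟨ContinuousLinearMap.proj (i, k), fun w => dif_neg h⟩
  have hu : ∀ k j, ∃ l : (Fin n × Fin n → ℝ) →L[ℝ] ℝ, ∀ w, strictMat (upPart w) k j = l w := by
    intro k j
    by_cases h : k < j
    · exact ⟨ContinuousLinearMap.proj (k, j), fun w => dif_pos h⟩
    · exact ⟨0, fun w => dif_neg h⟩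
  choose l hl using hl
  choose u hu using hu
  rw [hasFDerivAt_pi']
  intro p
  have h1 : (fun w => mulParts w p) = fun w : Fin n × Fin n → ℝ =>
      ∑ k, l p.1 k w * ((1 : Matrix (Fin n) (Fin n) ℝ) k p.2 + u k p.2 w) := by
    ext w
    simp only [mulParts, Matrix.mul_apply, uMat_eq_one_add, Matrix.add_apply, hl, hu]
  rw [h1]
  have h2 := HasFDerivAt.fun_sum (u := Finset.univ) fun k (_ : k ∈ Finset.univ) =>
    ((l p.1 k).hasFDerivAt (x := v)).mul
      (((u k p.2).hasFDerivAt (x := v)).const_add ((1 : Matrix (Fin n) (Fin n) ℝ) k p.2))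
  refine h2.congr_fderiv ?_
  ext w
  simp only [ContinuousLinearMap.comp_apply, ContinuousLinearMap.proj_apply, mulPartsDeriv_apply,
    Matrix.add_apply, Matrix.mul_apply, uMat_eq_one_add, hl, hu, ← Finset.sum_add_distrib,
    _root_.sum_apply, _root_.add_apply, _root_.smul_apply,
    smul_eq_mul]
  exact Finset.sum_congr rfl fun k _ => by ring

lemma det_mulPartsDeriv_ne_zero {v : Fin n × Fin n → ℝ} (hv : ∀ i, v (i, i) ≠ 0) :
    (mulPartsDeriv v).det ≠ 0 := by
  have hker : LinearMap.ker (mulPartsDeriv v : (Fin n × Fin n → ℝ) →ₗ[ℝ] (Fin n × Fin n → ℝ)) =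
      ⊥ := by
    refine LinearMap.ker_eq_bot'.mpr fun w hw => ?_
    have h : lowMat (lowPart w) * uMat (upPart v) = lowMat (lowPart v) * strictMat (-upPart w) := by
      rw [← zero_sub, strictMat_sub, Matrix.mul_sub]
      have : strictMat (0 : TriIdx n → ℝ) = 0 := by
        ext i j
        simp [strictMat]
      rw [this, Matrix.mul_zero, zero_sub, eq_neg_iff_add_eq_zero]
      ext i j
      exact congrFun hw (i, j)
    obtain ⟨h1, h2⟩ := eq_zero_of_lowMat_mul_uMat_eq (d := lowPart v) hv h
    exact eq_zero_of_parts h1 (neg_eq_zero.mp h2)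
  have := LinearEquiv.isUnit_det' (LinearEquiv.ofInjectiveEndo _ (LinearMap.ker_eq_bot.mp hker))
  exact this.ne_zero

lemma injOn_mulParts : Set.InjOn (mulParts (n := n)) {v | ∀ i, v (i, i) ≠ 0} := by
  intro v hv w hw h
  have h' : lowMat (lowPart v) * uMat (upPart v) = lowMat (lowPart w) * uMat (upPart w) := by
    rw [← toMat_mulParts, h, toMat_mulParts]
  have h2 : lowMat (lowPart (v - w)) * uMat (upPart v) =
      lowMat (lowPart w) * strictMat (upPart (w - v)) := by
    have : strictMat (upPart (w - v)) = uMat (upPart w) - uMat (upPart v) := by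
      rw [uMat_eq_one_add, uMat_eq_one_add, map_sub, strictMat_sub]
      abel
    rw [this, map_sub, lowMat_sub, Matrix.sub_mul, Matrix.mul_sub, h']
  obtain ⟨e1, e2⟩ := eq_zero_of_lowMat_mul_uMat_eq (d := lowPart w) hw h2
  refine sub_eq_zero.mp (eq_zero_of_parts e1 ?_)
  rw [← neg_sub, map_neg, e2, neg_zero]

lemma ae_mulParts {P : (Fin n × Fin n → ℝ) → Prop} (hP : ∀ᵐ v, P v) :
    ∀ᵐ v : Fin n × Fin n → ℝ, (∀ i, v (i, i) ≠ 0) → P (mulParts v) := by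
  obtain ⟨Z, hZsub, hZ, hZ0⟩ := exists_measurable_superset_of_null (ae_iff.mp hP)
  have hcont : Continuous (mulParts (n := n)) :=
    continuous_iff_continuousAt.mpr fun v => (hasFDerivAt_mulParts v).continuousAt
  set S : Set (Fin n × Fin n → ℝ) := {v | ∀ i, v (i, i) ≠ 0} ∩ mulParts ⁻¹' Z with hS
  have hD : MeasurableSet {v : Fin n × Fin n → ℝ | ∀ i, v (i, i) ≠ 0} := by
    rw [Set.ofPred_forall]
    exact MeasurableSet.iInter fun i =>
      (measurableSet_eq_fun (measurable_pi_apply (i, i)) measurable_const).compl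
  have hSm : MeasurableSet S := hD.inter (hcont.measurable hZ)
  have hder : ∀ v ∈ S, HasFDerivWithinAt mulParts (mulPartsDeriv v) S v := fun v _ =>
    (hasFDerivAt_mulParts v).hasFDerivWithinAt
  have h1 := lintegral_abs_det_fderiv_eq_addHaar_image volume hSm hder
    (injOn_mulParts.mono Set.inter_subset_left)
  have h2 : volume (mulParts '' S) = 0 :=
    measure_mono_null (Set.image_subset_iff.mpr Set.inter_subset_right) hZ0
  rw [h2, lintegral_eq_zero_iff' (aemeasurable_ofReal_abs_det_fderivWithin volume hSm hder)] at h1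
  have h3 : ∀ᵐ v ∂(volume.restrict S), False := by
    filter_upwards [h1, ae_restrict_mem hSm] with v hv hvS
    exact det_mulPartsDeriv_ne_zero hvS.1 (by simpa using hv)
  have h4 : volume S = 0 := by
    rw [ae_iff] at h3
    simpa using h3
  rw [ae_iff]
  refine measure_mono_null (fun v hv => ?_) h4
  simp only [Set.mem_ofPred_eq, Classical.not_imp] at hv
  exact ⟨hv.1, hZsub hv.2⟩

lemma ae_lowMat_uSL_smul_notMem [MeasurableSpace (SL n ⧸ intSL n)] [BorelSpace (SL n ⧸ intSL n)]
    (μ : Measure (SL n ⧸ intSL n)) [IsProbabilityMeasure μ]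
    [SMulInvariantMeasure (SL n) (SL n ⧸ intSL n) μ] (i : Fin n) {E : Set (SL n ⧸ intSL n)}
    (hE : MeasurableSet E) (h0 : μ E = 0) (x : SL n ⧸ intSL n) :
    ∀ᵐ q : (TriIdx n → ℝ) × (LowIdx n → ℝ), (∀ k, q.2 ⟨(k, k), lt_irrefl k⟩ ≠ 0) →
      (normSL i (lowMat q.2) * uSL q.1) • x ∉ E := by
  have h1 := ae_mulParts (ae_normSL_smul_notMem_of_null μ i hE h0 x)
  have hmp := volume_preserving_piEquivPiSubtypeProd (fun _ : Fin n × Fin n => ℝ)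
    (fun p => p.1 < p.2)
  have h2 := hmp.symm.quasiMeasurePreserving.ae h1
  filter_upwards [h2] with q hq hdiag
  set v := (MeasurableEquiv.piEquivPiSubtypeProd (fun _ : Fin n × Fin n => ℝ)
    (fun p => p.1 < p.2)).symm q with hv
  have hq' : (MeasurableEquiv.piEquivPiSubtypeProd (fun _ : Fin n × Fin n => ℝ)
    (fun p => p.1 < p.2)) v = q := MeasurableEquiv.apply_symm_apply _ q
  have e1 : upPart v = q.1 := congrArg Prod.fst hq'
  have e2 : lowPart v = q.2 := congrArg Prod.snd hq'
  have hd : ∀ k, v (k, k) ≠ 0 := fun k => by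
    have := hdiag k
    rwa [← e2] at this
  have hdet : (lowMat q.2).det ≠ 0 := by
    rw [det_lowMat]
    exact Finset.prod_ne_zero_iff.mpr fun k _ => hdiag k
  have h3 := hq hd
  rw [toMat_mulParts, e1, e2] at h3
  have h4 := h3 (by rwa [Matrix.det_mul, uMat_det, mul_one])
  rwa [← normSL_mul i hdet]

end LowerUpper

section Thickening

variable {n : ℕ}

lemma eventually_forall_abs_smul_sub_lt {f : SL n ⧸ intSL n → ℝ} (hf : Continuous f)
    (hfc : HasCompactSupport f) {ε : ℝ} (hε : 0 < ε) :
    ∀ᶠ g in 𝓝 (1 : SL n), ∀ y, |f (g • y) - f y| < ε := by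
  obtain ⟨C, hC, hC1⟩ := exists_compact_mem_nhds (1 : SL n)
  have hK : IsCompact ((fun q : SL n × (SL n ⧸ intSL n) => q.1⁻¹ • q.2) '' (C ×ˢ tsupport f)) :=
    (hC.prod hfc).image (continuous_fst.inv.smul continuous_snd)
  have h1 : ∀ᶠ g in 𝓝 (1 : SL n),
      ∀ y ∈ ((fun q : SL n × (SL n ⧸ intSL n) => q.1⁻¹ • q.2) '' (C ×ˢ tsupport f)),
        |f (g • y) - f y| < ε := by
    refine hK.eventually_forall_of_forall_eventually fun y _ => ?_
    have hc : Continuous fun q : SL n × (SL n ⧸ intSL n) => |f (q.1 • q.2) - f q.2| :=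
      ((hf.comp continuous_smul).sub (hf.comp continuous_snd)).abs
    exact hc.continuousAt.eventually_lt continuousAt_const (by simpa using hε)
  filter_upwards [h1, hC1] with g hg hgC y
  by_cases hy : y ∈ ((fun q : SL n × (SL n ⧸ intSL n) => q.1⁻¹ • q.2) '' (C ×ˢ tsupport f))
  · exact hg y hy
  · have e1 : f y = 0 := by
      by_contra h
      exact hy ⟨(1, y), ⟨mem_of_mem_nhds hC1, subset_tsupport f h⟩, by simp⟩
    have e2 : f (g • y) = 0 := by
      by_contra h
      exact hy ⟨(g, g • y), ⟨hgC, subset_tsupport f h⟩, by simp⟩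
    simpa [e1, e2] using hε

lemma inv_aSL (b : Fin n → ℝ) (hsum : ∑ i, b i = 0) (t : ℝ) :
    (aSL b hsum t)⁻¹ = aSL b hsum (-t) := by
  rw [inv_eq_iff_mul_eq_one]
  apply Subtype.ext
  change Matrix.diagonal (fun i => Real.exp (b i * t)) *
    Matrix.diagonal (fun i => Real.exp (b i * -t)) = (1 : Matrix (Fin n) (Fin n) ℝ)
  rw [Matrix.diagonal_mul_diagonal, ← Matrix.diagonal_one]
  congr 1
  ext i
  rw [← Real.exp_add]
  simp

lemma aSL_conj_apply (b : Fin n → ℝ) (hsum : ∑ i, b i = 0) (t : ℝ) (g : SL n) (i j : Fin n) :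
    (aSL b hsum t * g * (aSL b hsum t)⁻¹ : SL n) i j = Real.exp ((b i - b j) * t) * g i j := by
  rw [inv_aSL]
  change (Matrix.diagonal (fun i => Real.exp (b i * t)) * (g : Matrix (Fin n) (Fin n) ℝ) *
    Matrix.diagonal (fun i => Real.exp (b i * -t))) i j = _
  rw [Matrix.mul_diagonal, Matrix.diagonal_mul, mul_right_comm, ← Real.exp_add]
  congr 2
  ring

/-- Conjugation by `a_t`, `t ≥ 0`, does not expand lower-triangular matrices. -/
lemma eventually_aSL_conj_mem {b : Fin n → ℝ} (hmono : ∀ i j : Fin n, i ≤ j → b j ≤ b i)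
    (hsum : ∑ i, b i = 0) {V : Set (SL n)} (hV : V ∈ 𝓝 1) :
    ∀ᶠ g in 𝓝 (1 : SL n), (∀ i j, i < j → g i j = 0) →
      ∀ t, 0 ≤ t → aSL b hsum t * g * (aSL b hsum t)⁻¹ ∈ V := by
  obtain ⟨V', hV', hV'V⟩ := mem_nhds_induced _ _ _ |>.mp hV
  have hV'' : V' ∈ 𝓝 (fun i j => (1 : Matrix (Fin n) (Fin n) ℝ) i j) := hV'
  obtain ⟨δ, hδ, hball⟩ := Metric.mem_nhds_iff.mp hV''
  have hnear : ∀ᶠ g in 𝓝 (1 : SL n), ∀ i j, |g i j - (1 : Matrix (Fin n) (Fin n) ℝ) i j| < δ := by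
    rw [eventually_all]
    intro i
    rw [eventually_all]
    intro j
    have hc : Continuous fun g : SL n => |g i j - (1 : Matrix (Fin n) (Fin n) ℝ) i j| :=
      ((continuous_induced_dom.matrix_elem i j).sub continuous_const).abs
    exact hc.continuousAt.eventually_lt continuousAt_const (by simpa using hδ)
  filter_upwards [hnear] with g hg hlow t ht
  apply hV'V
  apply hball
  refine Metric.mem_ball.mpr ((dist_pi_lt_iff hδ).mpr fun i => (dist_pi_lt_iff hδ).mpr fun j => ?_)
  rw [Real.dist_eq]
  change |(aSL b hsum t * g * (aSL b hsum t)⁻¹ : SL n) i j - _| < δ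
  rw [aSL_conj_apply]
  rcases lt_trichotomy i j with hij | rfl | hij
  · simpa [hlow i j hij, Matrix.one_apply_ne hij.ne] using hδ
  · simpa using hg i i
  · have h1 := hg i j
    rw [Matrix.one_apply_ne hij.ne', sub_zero] at h1 ⊢
    rw [abs_mul, Real.abs_exp]
    refine lt_of_le_of_lt (mul_le_of_le_one_left (abs_nonneg _) ?_) h1
    rw [Real.exp_le_one_iff]
    exact mul_nonpos_of_nonpos_of_nonneg (sub_nonpos.mpr (hmono j i hij.le)) ht

lemma continuous_lowMat : Continuous (lowMat (n := n)) := by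
  refine continuous_matrix fun i j => ?_
  by_cases h : i < j
  · simpa [lowMat, h] using continuous_const
  · simpa [lowMat, h] using continuous_apply _

lemma measurable_normSL_lowMat (i : Fin n) :
    Measurable fun d : LowIdx n → ℝ => normSL i (lowMat d) := by
  have h : Measurable fun (d : LowIdx n → ℝ) (p : Fin n × Fin n) => lowMat d p.1 p.2 :=
    (continuous_pi fun p : Fin n × Fin n => continuous_lowMat.matrix_elem p.1 p.2).measurable
  exact (measurable_normSL i).comp h

lemma normSL_lowMat_apply_eq_zero (k : Fin n) {d : LowIdx n → ℝ} {i j : Fin n} (hij : i < j) :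
    normSL k (lowMat d) i j = 0 := by
  by_cases h : (lowMat d).det ≠ 0
  · rw [coe_normSL k h, Matrix.diagonal_mul, lowMat, Matrix.of_apply, dif_pos hij, mul_zero]
  · have : normSL k (lowMat d) = 1 := dif_neg h
    rw [this]
    exact Matrix.one_apply_ne hij.ne

lemma continuous_uSL : Continuous (uSL (n := n)) := by
  refine continuous_induced_rng.mpr (continuous_matrix fun i j => ?_)
  change Continuous fun c => uMat c i j
  by_cases h : i = j
  · simpa [uMat, h] using continuous_const
  · by_cases h' : i < j
    · simpa [uMat, h, h'] using continuous_apply _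
    · simpa [uMat, h, h'] using continuous_const

/-- The coordinates of the identity matrix. -/
def lowOne : LowIdx n → ℝ := fun p => (1 : Matrix (Fin n) (Fin n) ℝ) p.1.1 p.1.2

lemma lowMat_lowOne : lowMat (lowOne (n := n)) = 1 := by
  ext i j
  by_cases h : i < j
  · simp [lowMat, h, Matrix.one_apply_ne h.ne]
  · simp [lowMat, lowOne, h]

lemma tendsto_normSL_lowMat (i : Fin n) :
    Tendsto (fun d => normSL i (lowMat d)) (𝓝 lowOne) (𝓝 1) := by
  have hopen : IsOpen {A : Matrix (Fin n) (Fin n) ℝ | A.det ≠ 0} :=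
    isOpen_ne_fun continuous_id.matrix_det continuous_const
  have h1 : ContinuousAt (normSL i) (lowMat lowOne) :=
    (continuousOn_normSL i).continuousAt (hopen.mem_nhds (by simp [lowMat_lowOne]))
  have h2 := h1.tendsto.comp continuous_lowMat.continuousAt.tendsto
  rwa [lowMat_lowOne, normSL_one] at h2

lemma eventually_lowMat_diag_ne_zero :
    ∀ᶠ d in 𝓝 (lowOne (n := n)), ∀ k, d ⟨(k, k), lt_irrefl k⟩ ≠ 0 := by
  rw [eventually_all]
  intro k
  exact (continuous_apply _).continuousAt.eventually_ne (by simp [lowOne])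

variable [MeasurableSpace (SL n ⧸ intSL n)] [BorelSpace (SL n ⧸ intSL n)]
  (μ : Measure (SL n ⧸ intSL n)) [IsProbabilityMeasure μ]
  [SMulInvariantMeasure (SL n) (SL n ⧸ intSL n) μ]

lemma measurable_normSL_lowMat_mul_uSL_smul (i : Fin n) (x : SL n ⧸ intSL n) :
    Measurable fun q : (TriIdx n → ℝ) × (LowIdx n → ℝ) =>
      (normSL i (lowMat q.2) * uSL q.1) • x :=
  (((measurable_normSL_lowMat i).comp measurable_snd).mul
    (continuous_uSL.measurable.comp measurable_fst)).smul_const x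

lemma map_normSL_lowMat_mul_uSL_smul_absolutelyContinuous (i : Fin n) (x : SL n ⧸ intSL n)
    {s : Set ((TriIdx n → ℝ) × (LowIdx n → ℝ))} (hs : MeasurableSet s)
    (hdiag : ∀ q ∈ s, ∀ k, q.2 ⟨(k, k), lt_irrefl k⟩ ≠ 0) :
    (volume.restrict s).map (fun q => (normSL i (lowMat q.2) * uSL q.1) • x) ≪ μ := by
  refine Measure.AbsolutelyContinuous.mk fun E hE h0 => ?_
  rw [Measure.map_apply (measurable_normSL_lowMat_mul_uSL_smul i x) hE]
  have h1 : ∀ᵐ q ∂(volume.restrict s), (normSL i (lowMat q.2) * uSL q.1) • x ∉ E := by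
    filter_upwards [ae_restrict_of_ae (ae_lowMat_uSL_smul_notMem μ i hE h0 x),
      ae_restrict_mem hs] with q hq hqs
    exact hq (hdiag q hqs)
  rw [ae_iff] at h1
  simp only [not_not] at h1
  exact h1

/-- Equidistribution of translates, tested against compactly supported functions. -/
lemma tendsto_setIntegral_aSL_mul_uSL_smul [NeZero n] {b : Fin n → ℝ}
    (hmono : ∀ i j : Fin n, i ≤ j → b j ≤ b i) (hsum : ∑ i, b i = 0) (hb : b ≠ 0)
    (x : SL n ⧸ intSL n) {U : Set (TriIdx n → ℝ)} (hU : MeasurableSet U) (hUfin : volume U ≠ ⊤)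
    {f : SL n ⧸ intSL n → ℝ} (hf : Continuous f) (hfc : HasCompactSupport f) :
    Tendsto (fun t => ∫ c in U, f ((aSL b hsum t * uSL c) • x)) atTop
      (𝓝 (volume.real U * ∫ y, f y ∂μ)) := by
  obtain ⟨C, hC⟩ := hfc.exists_bound_of_continuous hf
  let F : BoundedContinuousFunction (SL n ⧸ intSL n) ℝ :=
    BoundedContinuousFunction.ofNormedAddCommGroup f hf C hC
  rw [Metric.tendsto_atTop]
  intro ε hε
  set u := volume.real U with hu
  have hu0 : 0 ≤ u := measureReal_nonneg
  have hε' : 0 < ε / (2 * (u + 1)) := by positivity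
  have hV := eventually_forall_abs_smul_sub_lt hf hfc hε'
  have hev := ((tendsto_normSL_lowMat (0 : Fin n)).eventually
    (eventually_aSL_conj_mem hmono hsum hV)).and eventually_lowMat_diag_ne_zero
  obtain ⟨r, hr, hball⟩ := Metric.eventually_nhds_iff_ball.mp hev
  set B := Metric.ball (lowOne (n := n)) r with hB
  have hBm : MeasurableSet B := measurableSet_ball
  have hBpos : 0 < volume.real B :=
    ENNReal.toReal_pos (Metric.measure_ball_pos volume _ hr).ne' measure_ball_lt_top.ne
  set v := volume.real B with hv
  have hsm : MeasurableSet (U ×ˢ B) := hU.prod hBm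
  have hsvol : volume.real (U ×ˢ B) = u * v := by
    rw [Measure.volume_eq_prod, measureReal_prod_prod]
  have hsfin : volume (U ×ˢ B) < ⊤ := by
    rw [Measure.volume_eq_prod, Measure.prod_prod]
    exact ENNReal.mul_lt_top hUfin.lt_top measure_ball_lt_top
  have : IsFiniteMeasure (volume.restrict (U ×ˢ B)) := isFiniteMeasure_restrict.mpr hsfin.ne
  set Φ : (TriIdx n → ℝ) × (LowIdx n → ℝ) → SL n ⧸ intSL n :=
    fun q => (normSL 0 (lowMat q.2) * uSL q.1) • x with hΦ
  have hΦm : Measurable Φ := measurable_normSL_lowMat_mul_uSL_smul 0 x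
  have hlim := tendsto_integral_comp_aSL_of_absolutelyContinuous μ hsum hb
    ((volume.restrict (U ×ˢ B)).map Φ)
    (map_normSL_lowMat_mul_uSL_smul_absolutelyContinuous μ 0 x hsm
      fun q hq => (hball q.2 hq.2).2) F
  have hreal : ((volume.restrict (U ×ˢ B)).map Φ).real Set.univ = u * v := by
    rw [map_measureReal_apply hΦm MeasurableSet.univ, Set.preimage_univ,
      measureReal_restrict_apply_univ, hsvol]
  rw [hreal, Metric.tendsto_atTop] at hlim
  obtain ⟨T, hT⟩ := hlim (v * (ε / 2)) (by positivity)
  refine ⟨max T 0, fun t ht => ?_⟩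
  have htT : T ≤ t := (le_max_left _ _).trans ht
  have ht0 : 0 ≤ t := (le_max_right _ _).trans ht
  have hft : Continuous fun y => f (aSL b hsum t • y) := hf.comp (continuous_const_smul _)
  have h1 := hT t htT
  have e1 : ∫ y, F (aSL b hsum t • y) ∂((volume.restrict (U ×ˢ B)).map Φ) =
      ∫ q in U ×ˢ B, f (aSL b hsum t • Φ q) :=
    integral_map hΦm.aemeasurable hft.aestronglyMeasurable
  have e2 : ∫ q in U ×ˢ B, f ((aSL b hsum t * uSL q.1) • x) =
      (∫ c in U, f ((aSL b hsum t * uSL c) • x)) * v := by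
    have := setIntegral_prod_mul (μ := volume) (ν := volume)
      (fun c : TriIdx n → ℝ => f ((aSL b hsum t * uSL c) • x)) (fun _ : LowIdx n → ℝ => (1 : ℝ)) U B
    simp only [mul_one, ← Measure.volume_eq_prod] at this
    rw [this]
    simp [hv]
  have hcu : Continuous fun c : TriIdx n → ℝ => f ((aSL b hsum t * uSL c) • x) :=
    hf.comp ((continuous_const.mul continuous_uSL).smul continuous_const)
  have i1 : IntegrableOn (fun q => f (aSL b hsum t • Φ q)) (U ×ˢ B) :=
    Integrable.of_bound (hft.measurable.comp hΦm).aestronglyMeasurable C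
      (Eventually.of_forall fun q => hC _)
  have i2 : IntegrableOn (fun q : (TriIdx n → ℝ) × (LowIdx n → ℝ) =>
      f ((aSL b hsum t * uSL q.1) • x)) (U ×ˢ B) :=
    Integrable.of_bound (hcu.comp continuous_fst).aestronglyMeasurable C
      (Eventually.of_forall fun q => hC _)
  have h2 : |(∫ q in U ×ˢ B, f (aSL b hsum t • Φ q)) -
      ∫ q in U ×ˢ B, f ((aSL b hsum t * uSL q.1) • x)| ≤ ε / (2 * (u + 1)) * (u * v) := by
    rw [← integral_sub i1 i2, ← Real.norm_eq_abs, ← hsvol]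
    refine norm_setIntegral_le_of_norm_le_const hsfin fun q hq => ?_
    have h3 := (hball q.2 hq.2).1 (fun i j hij => normSL_lowMat_apply_eq_zero 0 hij) t ht0
      ((aSL b hsum t * uSL q.1) • x)
    have h4 : aSL b hsum t * normSL 0 (lowMat q.2) * (aSL b hsum t)⁻¹ * (aSL b hsum t * uSL q.1) =
        aSL b hsum t * (normSL 0 (lowMat q.2) * uSL q.1) := by group
    rw [smul_smul, h4, mul_smul] at h3
    exact h3.le
  have h3 : ε / (2 * (u + 1)) * (u * v) ≤ v * (ε / 2) := by
    have : ε / (2 * (u + 1)) * (u * v) = v * (ε / 2) * (u / (u + 1)) := by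
      field_simp
    rw [this]
    exact mul_le_of_le_one_right (by positivity) ((div_le_one (by positivity)).mpr (by linarith))
  have hFf : ∫ y, F y ∂μ = ∫ y, f y ∂μ := rfl
  rw [e1, hFf, Real.dist_eq] at h1
  rw [e2] at h2
  rw [Real.dist_eq]
  have h4 : |(∫ c in U, f ((aSL b hsum t * uSL c) • x)) - u * ∫ y, f y ∂μ| * v < ε * v := by
    rw [← abs_of_pos hBpos, ← abs_mul, abs_of_pos hBpos]
    rw [abs_lt] at h1 ⊢
    rw [abs_le] at h2
    constructor <;> nlinarith [h1.1, h1.2, h2.1, h2.2]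
  exact lt_of_mul_lt_mul_right h4 hBpos.le

end Thickening

lemma measureReal_le_integral_of_one_le {X : Type*} [MeasurableSpace X] {μ : Measure X}
    [IsFiniteMeasure μ] {f : X → ℝ} {s : Set X} (hs : MeasurableSet s) (hf : Integrable f μ)
    (h0 : ∀ y, 0 ≤ f y) (h1 : ∀ y ∈ s, 1 ≤ f y) : μ.real s ≤ ∫ y, f y ∂μ := by
  rw [← integral_indicator_one hs]
  exact integral_mono ((integrable_const (1 : ℝ)).indicator hs) hf
    (Set.indicator_le' h1 fun y _ => h0 y)

lemma integral_le_measureReal_of_le_one {X : Type*} [MeasurableSpace X] {μ : Measure X}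
    [IsFiniteMeasure μ] {f : X → ℝ} {s : Set X} (hs : MeasurableSet s) (hf : Integrable f μ)
    (h1 : ∀ y, f y ≤ 1) (h0 : ∀ y ∉ s, f y ≤ 0) : ∫ y, f y ∂μ ≤ μ.real s := by
  rw [← integral_indicator_one hs]
  exact integral_mono hf ((integrable_const (1 : ℝ)).indicator hs)
    (Set.le_indicator (fun y _ => h1 y) h0)

/-- The indicator of a relatively compact open set with null boundary is approximated from below
and above by compactly supported continuous functions. -/
lemma exists_continuous_le_indicator_le {X : Type*} [TopologicalSpace X] [T2Space X]
    [LocallyCompactSpace X] [MeasurableSpace X] [BorelSpace X] (μ : Measure X) [IsFiniteMeasure μ]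
    [μ.Regular] {W : Set X} (hW : IsOpen W) (hWc : IsCompact (closure W))
    (hWb : μ (frontier W) = 0) {ε : ℝ} (hε : 0 < ε) :
    ∃ f g : X → ℝ, Continuous f ∧ HasCompactSupport f ∧ Continuous g ∧ HasCompactSupport g ∧
      (∀ y, f y ≤ W.indicator (fun _ => 1) y) ∧ (∀ y, W.indicator (fun _ => 1) y ≤ g y) ∧
      μ.real W - ε ≤ ∫ y, f y ∂μ ∧ ∫ y, g y ∂μ ≤ μ.real W + ε := by
  have hε' : ENNReal.ofReal ε ≠ 0 := (ENNReal.ofReal_pos.mpr hε).ne'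
  obtain ⟨K, hKW, hK, hKμ⟩ := hW.measurableSet.exists_isCompact_lt_add (measure_ne_top μ W) hε'
  obtain ⟨O, hWO, hO, hOμ⟩ := IsCompact.exists_isOpen_lt_add (μ := μ) hWc hε'
  have hclos : μ (closure W) = μ W := by
    refine le_antisymm ?_ (measure_mono subset_closure)
    rw [closure_eq_self_union_frontier]
    refine (measure_union_le _ _).trans ?_
    rw [hWb, add_zero]
  obtain ⟨f, hf1, hf0, hfc, hf⟩ := exists_continuous_one_zero_of_isCompact hK hW.isClosed_compl
    (Set.disjoint_compl_right_iff_subset.mpr hKW)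
  obtain ⟨g, hg1, hg0, hgc, hg⟩ := exists_continuous_one_zero_of_isCompact hWc hO.isClosed_compl
    (Set.disjoint_compl_right_iff_subset.mpr hWO)
  have hKr : μ.real W ≤ μ.real K + ε := by
    have := ENNReal.toReal_mono (by finiteness) hKμ.le
    rwa [ENNReal.toReal_add (by finiteness) (by finiteness), ENNReal.toReal_ofReal hε.le] at this
  have hOr : μ.real O ≤ μ.real W + ε := by
    rw [hclos] at hOμ
    have := ENNReal.toReal_mono (by finiteness) hOμ.le
    rwa [ENNReal.toReal_add (by finiteness) (by finiteness), ENNReal.toReal_ofReal hε.le] at this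
  refine ⟨f, g, f.continuous, hfc, g.continuous, hgc,
    Set.le_indicator (fun y _ => (hf y).2) fun y hy => (hf0 hy).le,
    Set.indicator_le' (fun y hy => (hg1 (subset_closure hy)).ge) fun y _ => (hg y).1, ?_, ?_⟩
  · have := measureReal_le_integral_of_one_le (μ := μ) hK.measurableSet
      (f.continuous.integrable_of_hasCompactSupport hfc) (fun y => (hf y).1)
      fun y hy => (hf1 hy).ge
    linarith
  · have := integral_le_measureReal_of_le_one (μ := μ) hO.measurableSet
      (g.continuous.integrable_of_hasCompactSupport hgc) (fun y => (hg y).2)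
      fun y hy => (hg0 hy).le
    linarith

theorem translates_equidistribute_in_SLn_mod_SLnZ
    (n : ℕ) (hn : 2 ≤ n) (b : Fin n → ℝ)
    (hmono : ∀ i j : Fin n, i ≤ j → b j ≤ b i)
    (hsum : ∑ i, b i = 0) (hb : b ≠ 0)
    [MeasurableSpace (SL n ⧸ intSL n)] [BorelSpace (SL n ⧸ intSL n)]
    (μ : Measure (SL n ⧸ intSL n)) [IsProbabilityMeasure μ]
    (hinv : ∀ g : SL n, Measure.map (fun x => g • x) μ = μ)
    (x : SL n ⧸ intSL n)
    (U : Set (TriIdx n → ℝ)) (hUopen : IsOpen U) (hUbdd : Bornology.IsBounded U)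
    (hUvol : 0 < volume U)
    (W : Set (SL n ⧸ intSL n)) (hWopen : IsOpen W) (hWbdd : IsCompact (closure W))
    (hWbdry : μ (frontier W) = 0) :
    Tendsto
      (fun t : ℝ =>
        (∫ c in U, Set.indicator W (fun _ => (1 : ℝ)) ((aSL b hsum t * uSL c) • x)) /
          (volume U).toReal)
      atTop (𝓝 (μ W).toReal) := by
  have : NeZero n := ⟨by omega⟩
  have : SMulInvariantMeasure (SL n) (SL n ⧸ intSL n) μ := ⟨fun g s hs => by
    rw [← Measure.map_apply (measurable_const_smul g) hs, hinv]⟩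
  have hUfin : volume U < ⊤ := hUbdd.measure_lt_top
  have hU0 : 0 < (volume U).toReal := ENNReal.toReal_pos hUvol.ne' hUfin.ne
  have : IsFiniteMeasure (volume.restrict U) := isFiniteMeasure_restrict.mpr hUfin.ne
  have hcont : ∀ t, Continuous fun c : TriIdx n → ℝ => (aSL b hsum t * uSL c) • x := fun t =>
    (continuous_const.mul continuous_uSL).smul continuous_const
  have hW : ∀ t, IntegrableOn (fun c => W.indicator (fun _ => (1 : ℝ))
      ((aSL b hsum t * uSL c) • x)) U := fun t =>
    (integrable_const (1 : ℝ)).indicator (hWopen.preimage (hcont t)).measurableSet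
  have h_integrable : ∀ {f : SL n ⧸ intSL n → ℝ}, Continuous f → HasCompactSupport f → ∀ t,
      IntegrableOn (fun c => f ((aSL b hsum t * uSL c) • x)) U := by
    intro f hf hfc t
    obtain ⟨C, hC⟩ := hfc.exists_bound_of_continuous hf
    exact Integrable.of_bound (hf.comp (hcont t)).aestronglyMeasurable C
      (Eventually.of_forall fun c => hC _)
  have hlim : ∀ {f : SL n ⧸ intSL n → ℝ}, Continuous f → HasCompactSupport f →
      Tendsto (fun t => (∫ c in U, f ((aSL b hsum t * uSL c) • x)) / (volume U).toReal) atTop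
        (𝓝 (∫ y, f y ∂μ)) := by
    intro f hf hfc
    have := (tendsto_setIntegral_aSL_mul_uSL_smul μ hmono hsum hb x hUopen.measurableSet hUfin.ne
      hf hfc).div_const (volume U).toReal
    rwa [Measure.real, mul_div_cancel_left₀ _ hU0.ne'] at this
  rw [tendsto_order]
  constructor
  · intro r hr
    obtain ⟨f, g, hf, hfc, hg, hgc, hfW, hWg, hfμ, hgμ⟩ :=
      exists_continuous_le_indicator_le μ hWopen hWbdd hWbdry
        (show 0 < ((μ W).toReal - r) / 2 by linarith)
    rw [Measure.real] at hfμ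
    filter_upwards [(hlim hf hfc).eventually (lt_mem_nhds (show r < _ by linarith))] with t ht
    refine ht.trans_le (div_le_div_of_nonneg_right ?_ hU0.le)
    exact integral_mono (h_integrable hf hfc t) (hW t) fun c => hfW _
  · intro r hr
    obtain ⟨f, g, hf, hfc, hg, hgc, hfW, hWg, hfμ, hgμ⟩ :=
      exists_continuous_le_indicator_le μ hWopen hWbdd hWbdry
        (show 0 < (r - (μ W).toReal) / 2 by linarith)
    rw [Measure.real] at hgμ
    filter_upwards [(hlim hg hgc).eventually (gt_mem_nhds (show _ < r by linarith))] with t ht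
    refine lt_of_le_of_lt (div_le_div_of_nonneg_right ?_ hU0.le) ht
    exact integral_mono (hW t) (h_integrable hg hgc t) fun c => hWg _

end
end

section
/- Let n = 3 and suppose b_1 > b_2 > b_3 (a regular one-parameter diagonal subgroup). Let τ > 0 and g ∈ SL_3(ℝ). Then the following are equivalent: (i) for every C > 0 there exists t > 0 such that δ(Ad(a_t g) sl_3(ℤ)) < C·e^{−τt}; (ii) for every C > 0 there exist t > 0 and γ ∈ SL_3(ℤ) with γ ≠ I such that ‖a_t g γ g^{-1} a_{−t} − I‖ < C·e^{−τt} (Frobenius norm). -/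
noncomputable section

/-- The Frobenius norm of a real matrix. -/
def frobNorm {n : ℕ} (X : Matrix (Fin n) (Fin n) ℝ) : ℝ :=
  Real.sqrt (∑ i, ∑ j, (X i j) ^ 2)

/-- The first minimum of a set of matrices: the infimum of the Frobenius norms of its
nonzero elements. -/
def firstMinM {n : ℕ} (Λ : Set (Matrix (Fin n) (Fin n) ℝ)) : ℝ :=
  sInf {r | ∃ X ∈ Λ, X ≠ 0 ∧ frobNorm X = r}

/-- The diagonal matrix `a_t = diag(e^{b₁ t}, …, e^{bₙ t})`. -/
def aMat {n : ℕ} (b : Fin n → ℝ) (t : ℝ) : Matrix (Fin n) (Fin n) ℝ :=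
  Matrix.diagonal fun i => Real.exp (b i * t)

/-- The lattice `sl_n(ℤ)` of trace-zero integer matrices, inside `sl_n(ℝ)`. -/
def slZ (n : ℕ) : Set (Matrix (Fin n) (Fin n) ℝ) :=
  {X | (∃ m : Matrix (Fin n) (Fin n) ℤ, X = m.map (fun a => (a : ℝ))) ∧ Matrix.trace X = 0}

theorem map_intCast_one_add {n : ℕ} (m : Matrix (Fin n) (Fin n) ℤ) :
    (1 + m).map (fun a => (a : ℝ)) = 1 + m.map (fun a => (a : ℝ)) := by
  ext i j
  by_cases h : i = j <;> simp [h]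

theorem abs_apply_le_frobNorm {n : ℕ} (X : Matrix (Fin n) (Fin n) ℝ) (i j : Fin n) :
    |X i j| ≤ frobNorm X := by
  refine Real.abs_le_sqrt ?_
  calc X i j ^ 2 ≤ ∑ l, X i l ^ 2 :=
        Finset.single_le_sum (f := fun l => X i l ^ 2) (fun _ _ => sq_nonneg _) (Finset.mem_univ j)
    _ ≤ ∑ k, ∑ l, X k l ^ 2 :=
        Finset.single_le_sum (f := fun k => ∑ l, X k l ^ 2)
          (fun _ _ => Finset.sum_nonneg fun _ _ => sq_nonneg _) (Finset.mem_univ i)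

theorem firstMinM_lt_iff {n : ℕ} {Λ : Set (Matrix (Fin n) (Fin n) ℝ)}
    (hΛ : ∃ X ∈ Λ, X ≠ 0) {r : ℝ} :
    firstMinM Λ < r ↔ ∃ X ∈ Λ, X ≠ 0 ∧ frobNorm X < r := by
  obtain ⟨X, hX, hX0⟩ := hΛ
  have hbdd : BddBelow {r | ∃ X ∈ Λ, X ≠ 0 ∧ frobNorm X = r} :=
    ⟨0, by rintro _ ⟨Y, -, -, rfl⟩; exact Real.sqrt_nonneg _⟩
  rw [firstMinM, csInf_lt_iff hbdd ⟨_, X, hX, hX0, rfl⟩]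
  constructor
  · rintro ⟨_, ⟨Y, hY, hY0, rfl⟩, hlt⟩
    exact ⟨Y, hY, hY0, hlt⟩
  · rintro ⟨Y, hY, hY0, hlt⟩
    exact ⟨_, ⟨Y, hY, hY0, rfl⟩, hlt⟩

/-- A continuous function of a matrix is close to its value at `0` on a Frobenius ball. -/
theorem exists_frobNorm_lt_imp_abs_sub_lt {n : ℕ} {f : Matrix (Fin n) (Fin n) ℝ → ℝ}
    (hf : Continuous f) {η : ℝ} (hη : 0 < η) :
    ∃ ε > 0, ∀ M, frobNorm M < ε → |f M - f 0| < η := by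
  have hopen : IsOpen {M : Fin n → Fin n → ℝ | |f (Matrix.of M) - f 0| < η} :=
    isOpen_lt (by exact (hf.sub continuous_const).abs) continuous_const
  obtain ⟨ε, hε, hball⟩ := Metric.isOpen_iff.1 hopen 0
    (by change |f 0 - f 0| < η; simpa using hη)
  refine ⟨ε, hε, fun M hM => hball (a := fun i j => M i j) ?_⟩
  rw [Metric.mem_ball, dist_pi_lt_iff hε]
  intro i
  rw [dist_pi_lt_iff hε]
  intro j
  simpa [Real.dist_eq] using (abs_apply_le_frobNorm M i j).trans_lt hM

theorem Int.eq_of_abs_cast_sub_lt_one {a b : ℤ} (h : |(a : ℝ) - b| < 1) : a = b := by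
  have h' : |a - b| < 1 := by exact_mod_cast h
  exact sub_eq_zero.1 (Int.abs_lt_one_iff.1 h')

/-- Integer matrices with a sufficiently small conjugate have trace `0`, and adding the identity
to them gives determinant `1`. -/
theorem exists_frobNorm_conj_lt_imp_trace_eq_zero_and_det_eq_one (n : ℕ) :
    ∃ ε > 0, ∀ (P : Matrix (Fin n) (Fin n) ℝ) (m : Matrix (Fin n) (Fin n) ℤ), IsUnit P.det →
      frobNorm (P * m.map (fun a => (a : ℝ)) * P⁻¹) < ε → m.trace = 0 ∧ (1 + m).det = 1 := by
  obtain ⟨ε₁, hε₁, htr⟩ := exists_frobNorm_lt_imp_abs_sub_lt (n := n) (f := Matrix.trace)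
    (by fun_prop) one_pos
  obtain ⟨ε₂, hε₂, hdet⟩ := exists_frobNorm_lt_imp_abs_sub_lt (n := n) (f := fun M => (1 + M).det)
    (by fun_prop) one_pos
  refine ⟨min ε₁ ε₂, lt_min hε₁ hε₂, fun P m hP hlt => ?_⟩
  have h₁ := htr _ (hlt.trans_le (min_le_left _ _))
  have h₂ := hdet _ (hlt.trans_le (min_le_right _ _))
  have htrace : (P * m.map (fun a => (a : ℝ)) * P⁻¹).trace = (m.trace : ℤ) := by
    rw [Matrix.trace_mul_comm, Matrix.nonsing_inv_mul_cancel_left _ _ hP]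
    simp [Matrix.trace]
  have hconj : 1 + P * m.map (fun a => (a : ℝ)) * P⁻¹ =
      P * (1 + m).map (fun a => (a : ℝ)) * P⁻¹ := by
    rw [map_intCast_one_add, mul_add, add_mul, mul_one, Matrix.mul_nonsing_inv _ hP]
  have hdet' : (1 + P * m.map (fun a => (a : ℝ)) * P⁻¹).det = ((1 + m).det : ℤ) := by
    rw [hconj, Matrix.det_conj ((Matrix.isUnit_iff_isUnit_det P).2 hP)]
    exact (RingHom.map_det (Int.castRingHom ℝ) (1 + m)).symm
  constructor
  · apply Int.eq_of_abs_cast_sub_lt_one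
    simpa [htrace] using h₁
  · apply Int.eq_of_abs_cast_sub_lt_one
    simpa [hdet'] using h₂

theorem aMat_mul_aMat_neg {n : ℕ} (b : Fin n → ℝ) (t : ℝ) : aMat b t * aMat b (-t) = 1 := by
  simp [aMat, Matrix.diagonal_mul_diagonal, ← Real.exp_add]

theorem isUnit_det_aMat {n : ℕ} (b : Fin n → ℝ) (t : ℝ) : IsUnit (aMat b t).det :=
  Matrix.isUnit_det_of_right_inverse (aMat_mul_aMat_neg b t)

theorem conj_ne_zero_iff {n : ℕ} {P X : Matrix (Fin n) (Fin n) ℝ} (hP : IsUnit P.det) :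
    P * X * P⁻¹ ≠ 0 ↔ X ≠ 0 := by
  have hP' : IsUnit P := (Matrix.isUnit_iff_isUnit_det P).2 hP
  have hPi : IsUnit P⁻¹ := Matrix.isUnit_nonsing_inv_iff.2 hP'
  rw [Ne, hPi.mul_left_eq_zero, hP'.mul_right_eq_zero]

theorem firstMinM_conj_slZ_lt_iff {P : Matrix (Fin 3) (Fin 3) ℝ} (hP : IsUnit P.det) {r : ℝ} :
    firstMinM ((fun X => P * X * P⁻¹) '' slZ 3) < r ↔
      ∃ m : Matrix (Fin 3) (Fin 3) ℤ, m.trace = 0 ∧ m ≠ 0 ∧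
        frobNorm (P * m.map (fun a => (a : ℝ)) * P⁻¹) < r := by
  have hmem : ∀ m : Matrix (Fin 3) (Fin 3) ℤ, m.trace = 0 → m.map (fun a => (a : ℝ)) ∈ slZ 3 :=
    fun m hm => ⟨⟨m, rfl⟩, by
      have : (m.map (fun a => (a : ℝ))).trace = (m.trace : ℤ) := by simp [Matrix.trace]
      rw [this, hm, Int.cast_zero]⟩
  have hmap0 : ∀ m : Matrix (Fin 3) (Fin 3) ℤ, m.map (fun a => (a : ℝ)) ≠ 0 ↔ m ≠ 0 := fun m => by
    simp [← Matrix.ext_iff]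
  rw [firstMinM_lt_iff]
  · constructor
    · rintro ⟨_, ⟨_, ⟨⟨m, rfl⟩, htr⟩, rfl⟩, h0, hlt⟩
      refine ⟨m, ?_, (hmap0 m).1 ((conj_ne_zero_iff hP).1 h0), hlt⟩
      have : ((m.trace : ℤ) : ℝ) = 0 := by rw [← htr]; simp [Matrix.trace]
      exact_mod_cast this
    · rintro ⟨m, htr, h0, hlt⟩
      exact ⟨_, ⟨_, hmem m htr, rfl⟩, (conj_ne_zero_iff hP).2 ((hmap0 m).2 h0), hlt⟩
  · refine ⟨_, ⟨_, hmem (Matrix.single 0 1 1) (by simp [Matrix.trace_single_eq_of_ne]), rfl⟩,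
      (conj_ne_zero_iff hP).2 ((hmap0 _).2 fun h => ?_)⟩
    simpa using congrFun (congrFun h 0) 1

theorem not_adjoint_diophantine_iff_not_diophantine_type
    (b : Fin 3 → ℝ) (h01 : b 1 < b 0) (h12 : b 2 < b 1)
    (hsum : ∑ i, b i = 0)
    (τ : ℝ) (hτ : 0 < τ)
    (g : Matrix (Fin 3) (Fin 3) ℝ) (hg : g.det = 1) :
    (∀ C > 0, ∃ t > 0,
        firstMinM ((fun X => (aMat b t * g) * X * (aMat b t * g)⁻¹) '' slZ 3) <
          C * Real.exp (-τ * t)) ↔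
      (∀ C > 0, ∃ t > 0, ∃ γ : Matrix (Fin 3) (Fin 3) ℤ, γ.det = 1 ∧ γ ≠ 1 ∧
        frobNorm (aMat b t * g * (γ.map (fun a => (a : ℝ))) * g⁻¹ * aMat b (-t) - 1) <
          C * Real.exp (-τ * t)) := by
  obtain ⟨ε, hε, hint⟩ := exists_frobNorm_conj_lt_imp_trace_eq_zero_and_det_eq_one 3
  have hgu : IsUnit g.det := by rw [hg]; exact isUnit_one
  have hPu : ∀ t, IsUnit (aMat b t * g).det := fun t => by
    rw [Matrix.det_mul]; exact (isUnit_det_aMat b t).mul hgu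
  have hconj : ∀ t (m : Matrix (Fin 3) (Fin 3) ℤ),
      aMat b t * g * ((1 + m).map (fun a => (a : ℝ))) * g⁻¹ * aMat b (-t) - 1 =
        aMat b t * g * m.map (fun a => (a : ℝ)) * (aMat b t * g)⁻¹ := fun t m => by
    have hinv : g⁻¹ * aMat b (-t) = (aMat b t * g)⁻¹ := by
      rw [Matrix.mul_inv_rev, Matrix.inv_eq_right_inv (aMat_mul_aMat_neg b t)]
    rw [mul_assoc _ g⁻¹, hinv, map_intCast_one_add, mul_add, add_mul, mul_one,
      Matrix.mul_nonsing_inv _ (hPu t), add_sub_cancel_left]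
  have hscale : ∀ C > 0, ∀ t > 0, min C ε * Real.exp (-τ * t) ≤ C * Real.exp (-τ * t) ∧
      min C ε * Real.exp (-τ * t) ≤ ε := fun C hC t ht => by
    refine ⟨by gcongr; exact min_le_left _ _, ?_⟩
    have hexp : Real.exp (-τ * t) ≤ 1 := Real.exp_le_one_iff.2 (by nlinarith)
    exact (mul_le_of_le_one_right (lt_min hC hε).le hexp).trans (min_le_right _ _)
  simp only [firstMinM_conj_slZ_lt_iff (hPu _)]
  constructor
  · intro h C hC
    obtain ⟨t, ht, m, -, hm0, hlt⟩ := h (min C ε) (lt_min hC hε)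
    obtain ⟨hle, hleε⟩ := hscale C hC t ht
    refine ⟨t, ht, 1 + m, (hint _ m (hPu t) (hlt.trans_le hleε)).2, by simpa using hm0, ?_⟩
    rw [hconj]
    exact hlt.trans_le hle
  · intro h C hC
    obtain ⟨t, ht, γ, -, hγ, hlt⟩ := h (min C ε) (lt_min hC hε)
    obtain ⟨hle, hleε⟩ := hscale C hC t ht
    obtain ⟨m, rfl⟩ : ∃ m, γ = 1 + m := ⟨γ - 1, by abel⟩
    rw [hconj] at hlt
    exact ⟨t, ht, m, (hint _ m (hPu t) (hlt.trans_le hleε)).1, by simpa using hγ,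
      hlt.trans_le hle⟩

end
end

section
/- Let w ∈ SL_n(ℚ) be a monomial matrix (exactly one nonzero entry in each row and each column, all entries rational). Then there exists a constant θ_w > 0, depending only on w, such that for every upper-triangular unipotent matrix u ∈ SL_n(ℝ), every nonzero vector of the set (wu)ℤ^n ∩ ℝ·e_n has Euclidean norm at least θ_w. In particular, if (wu)ℤ^n ∩ ℝ·e_n ≠ {0}, then this rank-one lattice in the line ℝ·e_n has covolume at least θ_w. -/
noncomputable section

/-- The Euclidean norm on `ι → ℝ`. -/
def eucNorm {ι : Type*} [Fintype ι] (v : ι → ℝ) : ℝ := Real.sqrt (∑ i, (v i) ^ 2)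

/-- If the entries of `u *ᵥ v` after `k` vanish, for `u` upper-triangular unipotent, then so do
those of `v`. -/
theorem eq_zero_of_mulVec_eq_zero_of_gt {ι R : Type*} [Fintype ι] [LinearOrder ι]
    [NonAssocSemiring R] {u : Matrix ι ι R} (hdiag : ∀ i, u i i = 1)
    (hupper : ∀ i j, j < i → u i j = 0) {v : ι → R} {k : ι}
    (hk : ∀ j, k < j → u.mulVec v j = 0) (j : ι) (hj : k < j) : v j = 0 := by
  induction j using WellFoundedGT.induction with
  | ind j ih =>
    have h := hk j hj
    rw [Matrix.mulVec, dotProduct, Finset.sum_eq_single j, hdiag, one_mul] at h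
    · exact h
    · intro i _ hij
      rcases lt_or_gt_of_ne hij with hlt | hgt
      · rw [hupper j i hlt, zero_mul]
      · rw [ih i hgt (hj.trans hgt), mul_zero]
    · simp

/-- If the entries of `u *ᵥ v` after `k` vanish, for `u` upper-triangular unipotent, then
`u *ᵥ v` and `v` have the same `k`-th entry. -/
theorem mulVec_apply_eq_of_mulVec_eq_zero_of_gt {ι R : Type*} [Fintype ι] [LinearOrder ι]
    [NonAssocSemiring R] {u : Matrix ι ι R} (hdiag : ∀ i, u i i = 1)
    (hupper : ∀ i j, j < i → u i j = 0) {v : ι → R} {k : ι}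
    (hk : ∀ j, k < j → u.mulVec v j = 0) : u.mulVec v k = v k := by
  rw [Matrix.mulVec, dotProduct, Finset.sum_eq_single k, hdiag, one_mul]
  · intro i _ hik
    rcases lt_or_gt_of_ne hik with hlt | hgt
    · rw [hupper k i hlt, zero_mul]
    · rw [eq_zero_of_mulVec_eq_zero_of_gt hdiag hupper hk i hgt, mul_zero]
  · simp

/-- The Euclidean norm dominates the absolute value of every coordinate. -/
theorem abs_apply_le_eucNorm {ι : Type*} [Fintype ι] (v : ι → ℝ) (i : ι) :
    |v i| ≤ eucNorm v := by
  refine Real.abs_le_sqrt ?_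
  exact Finset.single_le_sum (f := fun j => v j ^ 2) (fun j _ => sq_nonneg _) (Finset.mem_univ i)

theorem height_lower_bound_for_monomial_weyl_element
    (n : ℕ) (hn : 2 ≤ n)
    (w : Matrix (Fin n) (Fin n) ℚ) (hwdet : w.det = 1)
    (hwmono : ∃ σ : Equiv.Perm (Fin n), ∀ i j : Fin n, w i j ≠ 0 ↔ j = σ i) :
    ∃ θ : ℝ, 0 < θ ∧
      ∀ u : Matrix (Fin n) (Fin n) ℝ,
        (∀ i, u i i = 1) → (∀ i j : Fin n, j < i → u i j = 0) →
        ∀ m : Fin n → ℤ,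
          (∃ c : ℝ, ((w.map fun a => (a : ℝ)) * u).mulVec (fun i => (m i : ℝ)) =
            fun i => if i = (⟨n - 1, by omega⟩ : Fin n) then c else 0) →
          ((w.map fun a => (a : ℝ)) * u).mulVec (fun i => (m i : ℝ)) ≠ 0 →
          θ ≤ eucNorm (((w.map fun a => (a : ℝ)) * u).mulVec (fun i => (m i : ℝ))) := by
  obtain ⟨σ, hσ⟩ := hwmono
  set L : Fin n := ⟨n - 1, by omega⟩
  have hw : ∀ i, (w i (σ i) : ℝ) ≠ 0 := fun i => by exact_mod_cast (hσ i (σ i)).2 rfl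
  refine ⟨|(w L (σ L) : ℝ)|, abs_pos.2 (hw L), ?_⟩
  rintro u hdiag hupper m ⟨c, hc⟩ hne
  set v : Fin n → ℝ := fun i => (m i : ℝ)
  set x := ((w.map fun a => (a : ℝ)) * u).mulVec v with hx
  have hxi : ∀ i, x i = w i (σ i) * u.mulVec v (σ i) := by
    intro i
    rw [hx, ← Matrix.mulVec_mulVec, Matrix.mulVec, dotProduct, Finset.sum_eq_single (σ i)]
    · rfl
    · intro j _ hj
      have hwij : w i j = 0 := by
        by_contra h
        exact hj ((hσ i j).1 h)
      simp [hwij]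
    · simp
  have hx0 : ∀ i, i ≠ L → x i = 0 := fun i hi => (congrFun hc i).trans (if_neg hi)
  have hy0 : ∀ j, σ L < j → u.mulVec v j = 0 := by
    intro j hj
    have h := hxi (σ.symm j)
    rw [hx0 _ fun h => hj.ne (by rw [← h, σ.apply_symm_apply]), σ.apply_symm_apply] at h
    have hwj := hw (σ.symm j)
    rw [σ.apply_symm_apply] at hwj
    exact (mul_eq_zero.1 h.symm).resolve_left hwj
  have hxL : x L = w L (σ L) * (m (σ L) : ℝ) := by
    rw [hxi, mulVec_apply_eq_of_mulVec_eq_zero_of_gt hdiag hupper hy0]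
  have hm : m (σ L) ≠ 0 := by
    intro h0
    refine hne (funext fun i => ?_)
    by_cases hi : i = L
    · simp [hi, hxL, h0]
    · exact hx0 i hi
  have hm1 : (1 : ℝ) ≤ |(m (σ L) : ℝ)| := by exact_mod_cast Int.one_le_abs hm
  calc |(w L (σ L) : ℝ)| ≤ |(w L (σ L) : ℝ)| * |(m (σ L) : ℝ)| :=
        le_mul_of_one_le_right (abs_nonneg _) hm1
    _ = |x L| := by rw [hxL, abs_mul]
    _ ≤ eucNorm x := abs_apply_le_eucNorm x L

end
end
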